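/- For every k ≥ 2, the following families all coincide with the family L_fin(P, CF[−λ]) of programmed languages of finite index: L_fin(CD_∞, CF[−λ], t), L_fin(CD_∞, CF[−λ], =k), L_fin(CD_∞, CF[−λ], ≥k), and, for every k' ∈ ℕ and Δ ∈ {≤, =, ≥}, L_fin(CD_∞, CF[−λ], (t∧Δk')); this holds both with and without erasing rules. -/

import Mathlib

namespace CDHybrid

/-- Symbols: nonterminals are natural numbers, terminals come from `T`. -/
abbrev Symb (T : Type) := ℕ ⊕ T

/-- Sentential forms. -/
abbrev SForm (T : Type) := List (Symb T)

/-- A context-free rule `A → z`. -/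
abbrev Rule (T : Type) := ℕ × SForm T

/-- Number of nonterminal occurrences in a sentential form. -/
def ntCount {T : Type} (x : SForm T) : ℕ := (x.filter Sum.isLeft).length

/-- One rewriting step using some rule of the rule set `P`. -/
def RStep {T : Type} (P : List (Rule T)) (x y : SForm T) : Prop :=
  ∃ r ∈ P, ∃ u v : SForm T, x = u ++ Sum.inl r.1 :: v ∧ y = u ++ r.2 ++ v

/-- `m`-step derivation using only rules of `P`. -/
def StepsN {T : Type} (P : List (Rule T)) : ℕ → SForm T → SForm T → Prop
  | 0, x, y => x = y
  | m + 1, x, y => ∃ z, RStep P x z ∧ StepsN P m z y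

/-- `m`-step derivation using only rules of `P`, all intermediate (and the final)
sentential forms having at most `b` occurrences of nonterminals. -/
def StepsNB {T : Type} (P : List (Rule T)) (b : ℕ) : ℕ → SForm T → SForm T → Prop
  | 0, x, y => x = y
  | m + 1, x, y => ∃ z, RStep P x z ∧ ntCount z ≤ b ∧ StepsNB P b m z y

/-- Derivation modes of CD grammar systems. -/
inductive Mode where
  | eq : ℕ → Mode
  | le : ℕ → Mode
  | ge : ℕ → Mode
  | star : Mode
  | t : Mode
  | conj : Mode → Mode → Mode

/-- The predicate of a derivation mode: `modeOK P f m y` holds if an `m`-step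
derivation by the component `P` ending in `y` is acceptable for mode `f`. -/
def modeOK {T : Type} (P : List (Rule T)) : Mode → ℕ → SForm T → Prop
  | .eq k, m, _ => m = k
  | .le k, m, _ => m ≤ k
  | .ge k, m, _ => k ≤ m
  | .star, _, _ => True
  | .t, _, y => ¬ ∃ z, RStep P y z
  | .conj f g, m, y => modeOK P f m y ∧ modeOK P g m y

/-- A CD grammar system with context-free components. -/
structure CDGS (T : Type) where
  deg : ℕ
  start : ℕ
  comp : Fin deg → List (Rule T)

/-- λ-freeness: no erasing rules. -/
def CDGS.LamFree {T : Type} (G : CDGS T) : Prop :=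
  ∀ i : Fin G.deg, ∀ r ∈ G.comp i, r.2 ≠ []

/-- One derivation step of a component of `G` in mode `f`. -/
def CDGS.ModeStep {T : Type} (G : CDGS T) (f : Mode) (x y : SForm T) : Prop :=
  ∃ i : Fin G.deg, ∃ m : ℕ, StepsN (G.comp i) m x y ∧ modeOK (G.comp i) f m y

/-- One derivation step of a component of `G` in mode `f`, with all produced
sentential forms having at most `b` nonterminal occurrences. -/
def CDGS.ModeStepB {T : Type} (G : CDGS T) (f : Mode) (b : ℕ) (x y : SForm T) : Prop :=
  ∃ i : Fin G.deg, ∃ m : ℕ, StepsNB (G.comp i) b m x y ∧ modeOK (G.comp i) f m y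

/-- The language generated by `G` in mode `f`. -/
def CDGS.lang {T : Type} (G : CDGS T) (f : Mode) : Set (List T) :=
  { w | Relation.TransGen (G.ModeStep f) [Sum.inl G.start] (w.map Sum.inr) }

/-- The words of the language of `G` in mode `f` possessing a derivation of index
at most `b`, i.e., all sentential forms occurring in it have at most `b`
nonterminal occurrences. -/
def CDGS.langB {T : Type} (G : CDGS T) (f : Mode) (b : ℕ) : Set (List T) :=
  { w | ntCount ([Sum.inl G.start] : SForm T) ≤ b ∧
      Relation.TransGen (G.ModeStepB f b) [Sum.inl G.start] (w.map Sum.inr) }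

/-- Two languages are considered equal iff they differ at most in the empty word. -/
def EqL {T : Type} (L₁ L₂ : Set (List T)) : Prop := L₁ \ {[]} = L₂ \ {[]}

/-- The family `L(CD_n, CF[−λ], f)`; `lf = true` forbids erasing rules. -/
def CDFam (T : Type) (lf : Bool) (n : ℕ) (f : Mode) : Set (Set (List T)) :=
  { L | ∃ G : CDGS T, G.deg ≤ n ∧ (lf = true → G.LamFree) ∧ EqL (G.lang f) L }

/-- The family `L(CD_∞, CF[−λ], f)`. -/
def CDFamInf (T : Type) (lf : Bool) (f : Mode) : Set (Set (List T)) :=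
  { L | ∃ G : CDGS T, (lf = true → G.LamFree) ∧ EqL (G.lang f) L }

/-- The family `L_m(CD_n, CF[−λ], f)` of such languages of index at most `m`. -/
def CDFamInd (T : Type) (lf : Bool) (n : ℕ) (f : Mode) (m : ℕ) : Set (Set (List T)) :=
  { L | ∃ G : CDGS T, G.deg ≤ n ∧ (lf = true → G.LamFree) ∧ EqL (G.lang f) L ∧
      G.lang f ⊆ G.langB f m }

/-- The family `L_m(CD_∞, CF[−λ], f)`. -/
def CDFamIndInf (T : Type) (lf : Bool) (f : Mode) (m : ℕ) : Set (Set (List T)) :=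
  { L | ∃ G : CDGS T, (lf = true → G.LamFree) ∧ EqL (G.lang f) L ∧ G.lang f ⊆ G.langB f m }

/-- The family `L_fin(CD_∞, CF[−λ], f)`. -/
def CDFamFinInf (T : Type) (lf : Bool) (f : Mode) : Set (Set (List T)) :=
  { L | ∃ m : ℕ, 1 ≤ m ∧ L ∈ CDFamIndInf T lf f m }

/-- A context-free grammar. -/
structure CFG (T : Type) where
  start : ℕ
  rules : List (Rule T)

/-- The language generated by a context-free grammar. -/
def CFG.lang {T : Type} (G : CFG T) : Set (List T) :=
  { w | Relation.ReflTransGen (RStep G.rules) [Sum.inl G.start] (w.map Sum.inr) }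

/-- The words of `G.lang` having a derivation of index at most `m`. -/
def CFG.langB {T : Type} (G : CFG T) (m : ℕ) : Set (List T) :=
  { w | ntCount ([Sum.inl G.start] : SForm T) ≤ m ∧
      Relation.ReflTransGen (fun x y => RStep G.rules x y ∧ ntCount y ≤ m)
        [Sum.inl G.start] (w.map Sum.inr) }

/-- The family `L(CF)` of context-free languages. -/
def CFFam (T : Type) : Set (Set (List T)) := { L | ∃ G : CFG T, EqL G.lang L }

/-- The family `L_m(CF)` of context-free languages of index at most `m`. -/
def CFFamInd (T : Type) (m : ℕ) : Set (Set (List T)) :=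
  { L | ∃ G : CFG T, EqL G.lang L ∧ G.lang ⊆ G.langB m }

/-- The family `L_fin(CF)` of context-free languages of finite index. -/
def CFFamFin (T : Type) : Set (Set (List T)) :=
  { L | ∃ m : ℕ, 1 ≤ m ∧ L ∈ CFFamInd T m }

/-- A grammar is linear if every right-hand side contains at most one nonterminal. -/
def CFG.Linear {T : Type} (G : CFG T) : Prop := ∀ r ∈ G.rules, ntCount r.2 ≤ 1

/-- The family `L(LIN)` of linear context-free languages. -/
def LinFam (T : Type) : Set (Set (List T)) :=
  { L | ∃ G : CFG T, G.Linear ∧ EqL G.lang L }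

/-- The family `L(FIN)` of finite languages. -/
def FinFam (T : Type) : Set (Set (List T)) := { L | L.Finite }

/-- A programmed grammar with context-free rules. -/
structure PG (T : Type) where
  start : ℕ
  nLab : ℕ
  rule : Fin nLab → Rule T
  succ : Fin nLab → Set (Fin nLab)
  fail : Fin nLab → Set (Fin nLab)

def PG.LamFree {T : Type} (G : PG T) : Prop := ∀ r : Fin G.nLab, (G.rule r).2 ≠ []

/-- No appearance checking: all failure fields are empty. -/
def PG.NoAC {T : Type} (G : PG T) : Prop := ∀ r : Fin G.nLab, G.fail r = ∅

/-- One step of a programmed grammar on pairs (sentential form, label). -/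
def PG.PStep {T : Type} (G : PG T) (p q : SForm T × Fin G.nLab) : Prop :=
  (∃ u v : SForm T, p.1 = u ++ Sum.inl (G.rule p.2).1 :: v ∧
      q.1 = u ++ (G.rule p.2).2 ++ v ∧ q.2 ∈ G.succ p.2) ∨
  (Sum.inl (G.rule p.2).1 ∉ p.1 ∧ q.1 = p.1 ∧ q.2 ∈ G.fail p.2)

/-- The language generated by a programmed grammar. -/
def PG.lang {T : Type} (G : PG T) : Set (List T) :=
  { w | ∃ r₁ r₂ : Fin G.nLab,
      Relation.ReflTransGen G.PStep ([Sum.inl G.start], r₁) (w.map Sum.inr, r₂) }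

/-- The words of `G.lang` having a derivation of index at most `m`. -/
def PG.langB {T : Type} (G : PG T) (m : ℕ) : Set (List T) :=
  { w | ∃ r₁ r₂ : Fin G.nLab, ntCount ([Sum.inl G.start] : SForm T) ≤ m ∧
      Relation.ReflTransGen (fun p q => G.PStep p q ∧ ntCount q.1 ≤ m)
        ([Sum.inl G.start], r₁) (w.map Sum.inr, r₂) }

/-- The family `L_m(P, CF[−λ][, ac])`: programmed languages of index at most `m`;
`ac = false` forbids appearance checking, `lf = true` forbids erasing rules. -/
def PFamInd (T : Type) (lf ac : Bool) (m : ℕ) : Set (Set (List T)) :=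
  { L | ∃ G : PG T, (lf = true → G.LamFree) ∧ (ac = false → G.NoAC) ∧
      EqL G.lang L ∧ G.lang ⊆ G.langB m }

/-- The family `L_fin(P, CF[−λ][, ac])` of programmed languages of finite index. -/
def PFamFin (T : Type) (lf ac : Bool) : Set (Set (List T)) :=
  { L | ∃ m : ℕ, 1 ≤ m ∧ L ∈ PFamInd T lf ac m }

/-!
A programmed grammar simulates a CD grammar system by storing in its labels the working component,
the number of steps made so far up to a threshold, and the multiset of nonterminals of the
sentential form. Finite index bounds this multiset, so that finitely many labels suffice, and the
multiset decides whether a component can still be applied.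

Conversely, tag the nonterminals of a programmed grammar of index `m` with numbers so that those
of a sentential form become pairwise distinct, and let one of them, the master, also carry the
current label and the set of all tagged nonterminals present. One step then rewrites the master
together with at most one other nonterminal, and such a pair of rewritings can be forced to happen
jointly. If a component must make at least `k ≥ 2` steps, the two rules share one component, in
which the only further steps are a chain of renamings of the master. In a terminating mode, the
master first turns into a token; since the rule `a → a` prevents a component from terminating
while `a` is present, the token blocks all other components until it has been resolved.
-/

variable {T : Type}

/-! ### Sentential forms -/

section Forms

variable {x y z : SForm T} {A : ℕ} {w : SForm T} {P : List (Rule T)}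

/-- The multiset of nonterminals occurring in a sentential form. -/
def nts (x : SForm T) : Multiset ℕ := ↑(x.filterMap Sum.getLeft?)

@[simp] lemma nts_nil : nts ([] : SForm T) = 0 := rfl

@[simp] lemma nts_inl_cons (a : ℕ) (x : SForm T) : nts (Sum.inl a :: x) = a ::ₘ nts x := rfl

@[simp] lemma nts_inr_cons (c : T) (x : SForm T) : nts (Sum.inr c :: x) = nts x := rfl

@[simp] lemma nts_append (x y : SForm T) : nts (x ++ y) = nts x + nts y := by
  simp [nts, List.filterMap_append, ← Multiset.coe_add]

@[simp] lemma nts_map_inr (w : List T) : nts (w.map Sum.inr : SForm T) = 0 := by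
  induction w with
  | nil => rfl
  | cons _ _ ih => exact ih

lemma mem_nts : A ∈ nts x ↔ Sum.inl A ∈ x := by
  simp [nts, List.mem_filterMap]

lemma ntCount_eq_card_nts (x : SForm T) : ntCount x = (nts x).card := by
  induction x with
  | nil => rfl
  | cons s x ih => cases s <;> simp_all [ntCount, List.filter_cons]

lemma exists_rstep_iff : (∃ z, RStep P y z) ↔ ∃ r ∈ P, r.1 ∈ nts y := by
  constructor
  · rintro ⟨_, r, hr, u, v, rfl, _⟩
    exact ⟨r, hr, by simp⟩
  · rintro ⟨r, hr, h⟩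
    obtain ⟨u, v, rfl⟩ := List.append_of_mem (mem_nts.1 h)
    exact ⟨_, r, hr, u, v, rfl, rfl⟩

lemma RStep.mem_of_singleton (h : RStep P [Sum.inl A] y) : (A, y) ∈ P := by
  obtain ⟨r, hr, u, v, hx, rfl⟩ := h
  obtain ⟨rfl, hA, rfl⟩ : u = [] ∧ Sum.inl r.1 = (Sum.inl A : Symb T) ∧ v = [] := by
    cases u <;> simp_all
  simpa [← Sum.inl.inj hA] using hr

lemma RStep.exists_singleton (h : RStep P x y) : ∃ r ∈ P, RStep [r] x y :=
  let ⟨r, hr, huv⟩ := h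
  ⟨r, hr, r, List.mem_singleton_self r, huv⟩

lemma RStep.nts_eq_of_singleton {r : Rule T} (h : RStep [r] x y) :
    nts y = (nts x).erase r.1 + nts r.2 := by
  obtain ⟨_, hr, u, v, rfl, rfl⟩ := h
  obtain rfl := List.mem_singleton.1 hr
  simp [add_assoc, add_comm (nts v)]

end Forms

section Substitution

variable {x : SForm T} {A : ℕ} {w : SForm T} {P : List (Rule T)} {η θ : ℕ → SForm T}

/-- The one-letter sentential form of a nonterminal. -/
def atom (a : ℕ) : SForm T := [Sum.inl a]

/-- Simultaneous substitution of sentential forms for the nonterminals of a form. -/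
def subst (η : ℕ → SForm T) (x : SForm T) : SForm T :=
  x.flatMap (Sum.elim η fun c => [Sum.inr c])

@[simp] lemma nts_atom (a : ℕ) : nts (atom a : SForm T) = {a} := rfl

@[simp] lemma subst_nil : subst η [] = [] := rfl

@[simp] lemma subst_inl_cons (a : ℕ) : subst η (Sum.inl a :: x) = η a ++ subst η x := rfl

@[simp] lemma subst_inr_cons (c : T) : subst η (Sum.inr c :: x) = Sum.inr c :: subst η x := rfl

@[simp] lemma subst_append (x y : SForm T) : subst η (x ++ y) = subst η x ++ subst η y :=
  List.flatMap_append

lemma subst_congr (h : ∀ a ∈ nts x, η a = θ a) : subst η x = subst θ x := by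
  induction x with
  | nil => rfl
  | cons s x ih => cases s <;> simp_all

@[simp] lemma subst_atom (x : SForm T) : subst atom x = x := by
  induction x with
  | nil => rfl
  | cons s x ih => cases s <;> simp [ih, atom]

lemma subst_subst (η θ : ℕ → SForm T) (x : SForm T) :
    subst η (subst θ x) = subst (fun a => subst η (θ a)) x := by
  induction x with
  | nil => rfl
  | cons s x ih => cases s <;> simp [ih]

lemma subst_eq_of_stepsN (hη : ∀ r ∈ P, subst η r.2 = η r.1)
    (hid : ∀ a, (∀ r ∈ P, r.1 ≠ a) → η a = atom a) {m : ℕ} {y : SForm T}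
    (h : StepsN P m x y) (hy : ∀ r ∈ P, r.1 ∉ nts y) : y = subst η x := by
  induction m generalizing x with
  | zero =>
    rw [show x = y from h, subst_congr (θ := atom), subst_atom]
    exact fun a ha => hid a fun r hr hra => hy r hr (hra ▸ ha)
  | succ m ih =>
    obtain ⟨z, ⟨r, hr, u, v, rfl, rfl⟩, hz⟩ := h
    simp [ih hz, hη r hr]

lemma mem_nts_subst {a : ℕ} : a ∈ nts (subst η x) ↔ ∃ c ∈ nts x, a ∈ nts (η c) := by
  induction x with
  | nil => simp
  | cons s x ih => cases s <;> simp [ih]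

/-- Replacement of all occurrences of the nonterminal `A` by `w`. -/
def replace (A : ℕ) (w : SForm T) : SForm T → SForm T := subst (Function.update atom A w)

@[simp] lemma replace_append (x y : SForm T) :
    replace A w (x ++ y) = replace A w x ++ replace A w y := subst_append x y

@[simp] lemma replace_inl_self : replace A w (Sum.inl A :: x) = w ++ replace A w x := by
  simp [replace]

lemma mem_nts_replace {a : ℕ} :
    a ∈ nts (replace A w x) ↔ a ∈ nts x ∧ a ≠ A ∨ A ∈ nts x ∧ a ∈ nts w := by
  rw [replace, mem_nts_subst]
  constructor
  · rintro ⟨c, hc, ha⟩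
    by_cases hcA : c = A
    · obtain rfl := hcA
      exact .inr ⟨hc, by simpa using ha⟩
    · obtain rfl : a = c := by simpa [Function.update_of_ne hcA] using ha
      exact .inl ⟨hc, hcA⟩
  · rintro (⟨ha, haA⟩ | ⟨hA, ha⟩)
    · exact ⟨a, ha, by simp [Function.update_of_ne haA]⟩
    · exact ⟨A, hA, by simpa using ha⟩

lemma replace_of_notMem (h : A ∉ nts x) : replace A w x = x := by
  rw [replace, subst_congr (θ := atom), subst_atom]
  exact fun a ha => Function.update_of_ne (ne_of_mem_of_not_mem ha h) _ _

lemma replace_replace_comm {B : ℕ} {v : SForm T} (hAB : A ≠ B) (hA : A ∉ nts v) (hB : B ∉ nts w) :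
    replace A w (replace B v x) = replace B v (replace A w x) := by
  rw [replace, replace, subst_subst, subst_subst]
  refine subst_congr fun a _ => ?_
  have hv : subst (Function.update atom A w) v = v := replace_of_notMem hA
  have hw : subst (Function.update atom B v) w = w := replace_of_notMem hB
  by_cases haA : a = A
  · obtain rfl := haA
    simp [hAB, hw, atom]
  by_cases haB : a = B
  · obtain rfl := haB
    simp [haA, hv, atom]
  · simp [haA, haB, atom]

lemma replace_replace_atom {t : ℕ} (ht : t ∉ nts x) :
    replace t w (replace A (atom t) x) = replace A w x := by
  rw [replace, replace, replace, subst_subst]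
  refine subst_congr fun a ha => ?_
  have hat := ne_of_mem_of_not_mem ha ht
  by_cases haA : a = A
  · obtain rfl := haA
    simp [atom]
  · simp [haA, hat, atom]

lemma ntCount_replace_atom {a : ℕ} : ntCount (replace A (atom a) x) = ntCount x := by
  simp only [ntCount_eq_card_nts, replace]
  induction x with
  | nil => rfl
  | cons s x ih =>
    rcases s with c | c
    · by_cases hc : c = A <;> simp [hc, ih]
    · simpa using ih

lemma count_nts_replace_of_ne {a : ℕ} (haA : a ≠ A) (ha : a ∉ nts w) :
    (nts (replace A w x)).count a = (nts x).count a := by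
  rw [replace]
  induction x with
  | nil => rfl
  | cons s x ih =>
    rcases s with c | c
    · by_cases hc : c = A
      · obtain rfl := hc
        simp [ih, haA, Multiset.count_eq_zero_of_notMem ha]
      · simp [ih, hc, Multiset.count_cons]
    · simpa using ih

lemma count_nts_replace_atom_self {t : ℕ} (ht : t ∉ nts x) :
    (nts (replace A (atom t) x)).count t = (nts x).count A := by
  rw [replace]
  induction x with
  | nil => rfl
  | cons s x ih =>
    rcases s with c | c
    · obtain ⟨htc, ht⟩ : t ≠ c ∧ t ∉ nts x := by simpa using ht
      by_cases hc : c = A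
      · obtain rfl := hc
        simp [ih ht]
      · simp [ih ht, hc, htc, Ne.symm hc]
    · simpa using ih ht

lemma exists_split_of_count_eq_one (h : (nts x).count A = 1) :
    ∃ u v : SForm T, x = u ++ Sum.inl A :: v ∧ A ∉ nts u ∧ A ∉ nts v := by
  have hA : A ∈ nts x := Multiset.one_le_count_iff_mem.1 h.ge
  obtain ⟨u, v, rfl⟩ := List.append_of_mem (mem_nts.1 hA)
  rw [nts_append, nts_inl_cons, Multiset.count_add, Multiset.count_cons_self] at h
  exact ⟨u, v, rfl, Multiset.count_eq_zero.1 (by omega), Multiset.count_eq_zero.1 (by omega)⟩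

lemma replace_append_cons {u v : SForm T} (hu : A ∉ nts u) (hv : A ∉ nts v) :
    replace A w (u ++ Sum.inl A :: v) = u ++ w ++ v := by
  simp [replace_of_notMem hu, replace_of_notMem hv]

lemma nts_replace (h : (nts x).count A = 1) :
    nts (replace A w x) = (nts x).erase A + nts w := by
  obtain ⟨u, v, rfl, hu, hv⟩ := exists_split_of_count_eq_one h
  rw [replace_append_cons hu hv]
  simp only [nts_append, nts_inl_cons, Multiset.add_cons, Multiset.erase_cons_head]
  exact add_right_comm _ _ _

lemma rstep_replace (hr : (A, w) ∈ P) (h : (nts x).count A = 1) :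
    RStep P x (replace A w x) := by
  obtain ⟨u, v, rfl, hu, hv⟩ := exists_split_of_count_eq_one h
  exact ⟨_, hr, u, v, rfl, replace_append_cons hu hv⟩

lemma RStep.exists_eq_replace {y : SForm T} (hx : (nts x).Nodup) (h : RStep P x y) :
    ∃ r ∈ P, r.1 ∈ nts x ∧ y = replace r.1 r.2 x := by
  obtain ⟨r, hr, u, v, rfl, rfl⟩ := h
  have hnot : r.1 ∉ nts u + nts v := by
    rw [nts_append, nts_inl_cons, Multiset.add_cons, Multiset.nodup_cons] at hx
    exact hx.1
  rw [Multiset.mem_add, not_or] at hnot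
  exact ⟨r, hr, by simp, (replace_append_cons hnot.1 hnot.2).symm⟩

end Substitution

section Relabelling

variable {g : ℕ → ℕ} {x y : SForm T} {A : ℕ} {w : SForm T}

/-- The sentential form with all nonterminals renamed by `g`. -/
def relabel (g : ℕ → ℕ) : SForm T → SForm T := List.map (Sum.map g id)

lemma nts_relabel (g : ℕ → ℕ) (x : SForm T) : nts (relabel g x) = (nts x).map g := by
  induction x with
  | nil => rfl
  | cons s x ih => cases s <;> simpa [relabel] using ih

lemma ntCount_relabel (g : ℕ → ℕ) (x : SForm T) : ntCount (relabel g x) = ntCount x := by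
  rw [ntCount_eq_card_nts, nts_relabel, Multiset.card_map, ntCount_eq_card_nts]

lemma relabel_eq_of_nts_eq_zero (hx : nts x = 0) : relabel g x = x := by
  induction x with
  | nil => rfl
  | cons s x ih =>
    cases s with
    | inl a => exact absurd hx (by simp)
    | inr c => exact congrArg (Sum.inr c :: ·) (ih hx)

lemma relabel_replace_atom {a : ℕ} (ha : g a = g A) :
    relabel g (replace A (atom a) x) = relabel g x := by
  induction x with
  | nil => rfl
  | cons s x ih =>
    rcases s with c | c
    · by_cases hc : c = A
      · simpa [hc, replace, relabel, atom, ha] using ih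
      · simpa [hc, replace, relabel, atom] using ih
    · simpa [replace, relabel] using ih

lemma relabel_replace_congr {v : SForm T} (h : relabel g v = relabel g w) :
    relabel g (replace A v x) = relabel g (replace A w x) := by
  induction x with
  | nil => rfl
  | cons s x ih =>
    rcases s with c | c
    · by_cases hc : c = A
      · simp_all [replace, relabel]
      · simpa [hc, replace, relabel, atom] using ih
    · simpa [replace, relabel] using ih

lemma rstep_relabel_replace (h : (nts x).count A = 1) :
    RStep [(g A, relabel g w)] (relabel g x) (relabel g (replace A w x)) := by
  obtain ⟨u, v, rfl, hu, hv⟩ := exists_split_of_count_eq_one h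
  exact ⟨_, List.mem_singleton_self _, relabel g u, relabel g v, by simp [relabel],
    by simp [relabel, replace_of_notMem hu, replace_of_notMem hv]⟩

lemma RStep.exists_eq_relabel_replace {r : Rule T} (hx : (nts x).Nodup)
    (h : RStep [r] (relabel g x) y) : ∃ A ∈ nts x, g A = r.1 ∧
      ∀ w, relabel g w = r.2 → y = relabel g (replace A w x) := by
  obtain ⟨r, hr, u', v', hsplit, rfl⟩ := h
  obtain rfl := List.mem_singleton.1 hr
  obtain ⟨u, t, rfl, rfl, ht⟩ := List.map_eq_append_iff.1 hsplit
  obtain ⟨s, v, rfl, hs, rfl⟩ := List.map_eq_cons_iff.1 ht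
  obtain ⟨A, rfl, hA⟩ : ∃ A, s = Sum.inl A ∧ g A = r.1 := by
    cases s <;> simp_all
  refine ⟨A, by simp, hA, fun w hw => ?_⟩
  have hnot : A ∉ nts u + nts v := by
    rw [nts_append, nts_inl_cons, Multiset.add_cons, Multiset.nodup_cons] at hx
    exact hx.1
  rw [Multiset.mem_add, not_or] at hnot
  rw [← hw, replace_append_cons hnot.1 hnot.2]
  simp [relabel]

end Relabelling

section Derivations

variable {P : List (Rule T)} {b m n : ℕ} {x y z : SForm T}

lemma RStep.refl_of_loop {A : ℕ} (hr : (A, atom A) ∈ P) (hA : A ∈ nts x) : RStep P x x := by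
  obtain ⟨u, v, rfl⟩ := List.append_of_mem (mem_nts.1 hA)
  exact ⟨_, hr, u, v, rfl, by simp [atom]⟩

lemma StepsNB.stepsN (h : StepsNB P b m x y) : StepsN P m x y := by
  induction m generalizing x with
  | zero => exact h
  | succ m ih => exact let ⟨z, hz, _, h'⟩ := h; ⟨z, hz, ih h'⟩

lemma StepsN.tail (h : StepsN P m x y) (hyz : RStep P y z) : StepsN P (m + 1) x z := by
  induction m generalizing x with
  | zero => exact ⟨z, (show x = y from h) ▸ hyz, rfl⟩
  | succ m ih => exact let ⟨t, ht, h'⟩ := h; ⟨t, ht, ih h'⟩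

lemma StepsN.eq_of_forall_notMem (h : StepsN P m x y) (hx : ∀ r ∈ P, r.1 ∉ nts x) : y = x := by
  cases m with
  | zero => exact h.symm
  | succ m =>
    obtain ⟨z, hz, -⟩ := h
    obtain ⟨r, hr, hmem⟩ := exists_rstep_iff.1 ⟨z, hz⟩
    exact (hx r hr hmem).elim

lemma StepsN.sum_map_nts {φ : ℕ → ℕ} (hφ : ∀ r ∈ P, φ r.1 = ((nts r.2).map φ).sum + 1)
    (h : StepsN P m x y) : ((nts x).map φ).sum = ((nts y).map φ).sum + m := by
  induction m generalizing x with
  | zero => rw [show x = y from h, Nat.add_zero]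
  | succ m ih =>
    obtain ⟨z, ⟨r, hr, u, v, rfl, rfl⟩, hz⟩ := h
    have hr := hφ r hr
    have hz := ih hz
    rw [nts_append, nts_append, Multiset.map_add, Multiset.map_add, Multiset.sum_add,
      Multiset.sum_add] at hz
    rw [nts_append, nts_inl_cons, Multiset.map_add, Multiset.map_cons, Multiset.sum_add,
      Multiset.sum_cons]
    omega

lemma StepsNB.trans (h : StepsNB P b m x y) (h' : StepsNB P b n y z) :
    StepsNB P b (m + n) x z := by
  induction m generalizing x with
  | zero => rwa [Nat.zero_add, show x = y from h]
  | succ m ih =>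
    obtain ⟨t, ht, hb, hty⟩ := h
    rw [Nat.add_right_comm]
    exact ⟨t, ht, hb, ih hty⟩

lemma StepsNB.single (h : RStep P x y) (hy : ntCount y ≤ b) : StepsNB P b 1 x y :=
  ⟨y, h, hy, rfl⟩

lemma StepsNB.tail (h : StepsNB P b m x y) (hyz : RStep P y z) (hz : ntCount z ≤ b) :
    StepsNB P b (m + 1) x z :=
  h.trans (.single hyz hz)

lemma StepsNB.of_refl (h : RStep P x x) (hx : ntCount x ≤ b) (m : ℕ) : StepsNB P b m x x := by
  induction m with
  | zero => rfl
  | succ m ih => exact ⟨x, h, hx, ih⟩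

end Derivations

lemma CDGS.langB_subset_lang (G : CDGS T) (f : Mode) (m : ℕ) : G.langB f m ⊆ G.lang f :=
  fun _ h => Relation.TransGen.mono (fun _ _ ⟨i, n, h, hf⟩ => ⟨i, n, h.stepsN, hf⟩) _ _ h.2

lemma PG.langB_subset_lang (G : PG T) (m : ℕ) : G.langB m ⊆ G.lang :=
  fun _ ⟨r₁, r₂, _, h⟩ => ⟨r₁, r₂, Relation.ReflTransGen.mono (fun _ _ h => h.1) _ _ h⟩

lemma PG.NoAC.pstep_iff {G : PG T} (hG : G.NoAC) {x y : SForm T} {p q : Fin G.nLab} :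
    G.PStep (x, p) (y, q) ↔ RStep [G.rule p] x y ∧ q ∈ G.succ p := by
  simp only [PG.PStep, RStep, hG p, List.mem_singleton, Set.mem_empty_iff_false, and_false,
    or_false, exists_eq_left]
  exact ⟨fun ⟨u, v, hx, hy, h⟩ => ⟨⟨u, v, hx, hy⟩, h⟩, fun ⟨⟨u, v, hx, hy⟩, h⟩ => ⟨u, v, hx, hy, h⟩⟩

lemma exists_nts_lt {S : Set (SForm T)} (hS : S.Finite) : ∃ B, ∀ x ∈ S, ∀ a ∈ nts x, a < B := by
  obtain ⟨B, hB⟩ := (hS.biUnion fun x _ => (nts x).toFinset.finite_toSet).bddAbove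
  refine ⟨B + 1, fun x hx a ha => Nat.lt_succ_of_le (hB ?_)⟩
  exact Set.mem_biUnion hx (Multiset.mem_toFinset.2 ha)

lemma exists_symbol_bound {ι : Type*} [Finite ι] (s : ℕ) (rules : ι → List (Rule T)) :
    ∃ B, s < B ∧ ∀ i, ∀ r ∈ rules i, r.1 < B ∧ ∀ a ∈ nts r.2, a < B := by
  have hfin : (⋃ i, (fun r => Sum.inl r.1 :: r.2) '' {r | r ∈ rules i}).Finite :=
    Set.finite_iUnion fun i => (List.finite_toSet (rules i)).image _
  obtain ⟨B, hB⟩ := exists_nts_lt (hfin.insert [Sum.inl s])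
  have hrule i r (hr : r ∈ rules i) : ∀ a ∈ nts (Sum.inl r.1 :: r.2), a < B :=
    hB _ (.inr (Set.mem_iUnion.2 ⟨i, r, hr, rfl⟩))
  exact ⟨B, hB _ (.inl rfl) s (by simp), fun i r hr =>
    ⟨hrule i r hr _ (by simp), fun a ha => hrule i r hr a (by simp [ha])⟩⟩

/-! ### Grammars with a finite control -/

/-- A context-free grammar whose rules are scheduled by a control automaton; the intermediate
notion between CD grammar systems and programmed grammars. A transition `(q, r, q')` applies the
rule `r` and moves the control from `q` to `q'`. -/
structure ControlledGrammar (T : Type) where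
  State : Type
  start : ℕ
  initial : Set State
  trans : Set (State × Rule T × State)

namespace ControlledGrammar

variable (C : ControlledGrammar T)

/-- One step of a controlled grammar on pairs of a sentential form and a control state. -/
def Step (c d : SForm T × C.State) : Prop :=
  ∃ r, (c.2, r, d.2) ∈ C.trans ∧ RStep [r] c.1 d.1

/-- The language of a controlled grammar. Every control state is accepting. -/
def lang : Set (List T) :=
  {w | ∃ q₀ ∈ C.initial, ∃ q,
    Relation.ReflTransGen C.Step ([Sum.inl C.start], q₀) (w.map Sum.inr, q)}

/-- The words derived with at most `m` nonterminals in each sentential form after the first. -/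
def langB (m : ℕ) : Set (List T) :=
  {w | ∃ q₀ ∈ C.initial, ∃ q, Relation.ReflTransGen (fun c d => C.Step c d ∧ ntCount d.1 ≤ m)
    ([Sum.inl C.start], q₀) (w.map Sum.inr, q)}

/-- The labels of the programmed grammar simulating a controlled grammar. The label `halt` only
serves to keep success fields nonempty. -/
inductive Label
  | start
  | halt
  | apply (t : C.trans)

instance [Finite C.trans] : Finite C.Label :=
  Finite.of_surjective (Option.elim · .start (Option.elim · .halt Label.apply)) fun
    | .start => ⟨none, rfl⟩
    | .halt => ⟨some none, rfl⟩
    | .apply t => ⟨some (some t), rfl⟩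

variable {C}

/-- The rule carried by a label; `B` is the start symbol of the programmed grammar. -/
def labelRule (B : ℕ) : C.Label → Rule T
  | .apply t => t.1.2.1
  | _ => (B, [Sum.inl C.start])

/-- The labels of the transitions leaving one of the states in `Q`. -/
def labelsFrom (Q : Set C.State) : Set C.Label :=
  {l | ∃ t : C.trans, l = .apply t ∧ t.1.1 ∈ Q}

/-- The success field of a label. -/
def labelSucc : C.Label → Set C.Label
  | .start => labelsFrom C.initial
  | .halt => ∅
  | .apply t => insert .halt (labelsFrom {t.1.2.2})

variable (C) in
/-- The programmed grammar simulating a controlled grammar from the fresh start symbol `B`,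
which forces the derivation to begin in an initial state. -/
noncomputable def toPG [Finite C.trans] (B : ℕ) : PG T where
  start := B
  nLab := Nat.card C.Label
  rule i := labelRule B ((Finite.equivFin C.Label).symm i)
  succ i := {j | (Finite.equivFin C.Label).symm j ∈ labelSucc ((Finite.equivFin C.Label).symm i)}
  fail _ := ∅

variable [Finite C.trans] {B : ℕ}

lemma toPG_pstep_iff {x y : SForm T} {l l' : C.Label} :
    (C.toPG B).PStep (x, Finite.equivFin C.Label l) (y, Finite.equivFin C.Label l') ↔
      RStep [labelRule B l] x y ∧ l' ∈ labelSucc l := by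
  have hNoAC : (C.toPG B).NoAC := fun _ => rfl
  have hrule : (C.toPG B).rule (Finite.equivFin C.Label l) = labelRule B l := by simp [toPG]
  have hsucc : Finite.equivFin C.Label l' ∈ (C.toPG B).succ (Finite.equivFin C.Label l) ↔
      l' ∈ labelSucc l := by
    change (Finite.equivFin C.Label).symm _ ∈ labelSucc ((Finite.equivFin C.Label).symm _) ↔ _
    simp only [Equiv.symm_apply_apply]
  exact hNoAC.pstep_iff.trans (and_congr (by rw [hrule]) hsucc)

lemma exists_reflTransGen_of_toPG (hB : ∀ t ∈ C.trans, t.2.1.1 ≠ B) {l₀ : C.Label}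
    {d : SForm T × Fin (Nat.card C.Label)}
    (h : Relation.ReflTransGen (C.toPG B).PStep ([Sum.inl B], Finite.equivFin C.Label l₀) d) :
    d.1 = [Sum.inl B] ∨ ∃ q₀ ∈ C.initial, ∃ q,
      (Finite.equivFin C.Label).symm d.2 ∈ insert .halt (labelsFrom {q}) ∧
      Relation.ReflTransGen C.Step ([Sum.inl C.start], q₀) (d.1, q) := by
  induction h with
  | refl => exact .inl rfl
  | @tail c d _ hcd ih =>
    obtain ⟨x, i⟩ := c
    obtain ⟨y, j⟩ := d
    obtain ⟨l, rfl⟩ := (Finite.equivFin C.Label).surjective i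
    obtain ⟨l', rfl⟩ := (Finite.equivFin C.Label).surjective j
    obtain ⟨hxy, hsucc⟩ := toPG_pstep_iff.1 hcd
    simp only [Equiv.symm_apply_apply] at ih ⊢
    right
    obtain rfl | ⟨q₀, hq₀, q, hlq, hreach⟩ := ih
    · have hrule := List.mem_singleton.1 hxy.mem_of_singleton
      cases l with
      | start =>
        obtain ⟨t, rfl, ht⟩ := hsucc
        obtain rfl : y = [Sum.inl C.start] := congrArg Prod.snd hrule
        exact ⟨_, ht, _, .inr ⟨t, rfl, rfl⟩, .refl⟩
      | halt => exact hsucc.elim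
      | apply t => exact (hB t.1 t.2 (congrArg Prod.fst hrule).symm).elim
    · obtain rfl | ⟨t, rfl, rfl⟩ := hlq
      · exact hsucc.elim
      · exact ⟨q₀, hq₀, t.1.2.2, hsucc, hreach.tail ⟨_, t.2, hxy⟩⟩

lemma lang_toPG_subset (hB : ∀ t ∈ C.trans, t.2.1.1 ≠ B) : (C.toPG B).lang ⊆ C.lang := by
  rintro w ⟨i, j, h⟩
  obtain ⟨l, rfl⟩ := (Finite.equivFin C.Label).surjective i
  obtain hw | ⟨q₀, hq₀, q, -, hq⟩ := exists_reflTransGen_of_toPG hB h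
  · exact absurd (congrArg nts hw) (by simp)
  · exact ⟨q₀, hq₀, q, hq⟩

lemma toPG_reflTransGen {m : ℕ} (hm : 1 ≤ m) {q₀ : C.State} (hq₀ : q₀ ∈ C.initial)
    {d : SForm T × C.State}
    (h : Relation.ReflTransGen (fun c d => C.Step c d ∧ ntCount d.1 ≤ m)
      ([Sum.inl C.start], q₀) d) :
    ∀ l ∈ labelsFrom {d.2}, Relation.ReflTransGen
      (fun p q => (C.toPG B).PStep p q ∧ ntCount q.1 ≤ m)
      ([Sum.inl B], Finite.equivFin C.Label .start) (d.1, Finite.equivFin C.Label l) := by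
  induction h with
  | refl =>
    rintro _ ⟨t, rfl, ht⟩
    have hstart : RStep [labelRule B (.start : C.Label)] [Sum.inl B] [Sum.inl C.start] :=
      ⟨_, List.mem_singleton_self _, [], [], rfl, rfl⟩
    refine .single ⟨toPG_pstep_iff.2 ⟨hstart, t, rfl, ?_⟩, by rwa [ntCount_eq_card_nts]⟩
    exact (show t.1.1 = q₀ from ht) ▸ hq₀
  | tail _ hcd ih =>
    obtain ⟨⟨r, ht, hr⟩, hd⟩ := hcd
    exact fun l hl => (ih _ ⟨⟨_, ht⟩, rfl, rfl⟩).tail ⟨toPG_pstep_iff.2 ⟨hr, .inr hl⟩, hd⟩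

lemma langB_subset_langB_toPG {m : ℕ} (hm : 1 ≤ m) : C.langB m ⊆ (C.toPG B).langB m := by
  rintro w ⟨q₀, hq₀, q, h⟩
  obtain heq | ⟨c, hc, ⟨r, ht, hr⟩, hw⟩ := h.cases_tail
  · exact absurd (congrArg (nts ∘ Prod.fst) heq) (by simp)
  · exact ⟨_, Finite.equivFin C.Label .halt, by rwa [ntCount_eq_card_nts],
      (toPG_reflTransGen hm hq₀ hc _ ⟨⟨_, ht⟩, rfl, rfl⟩).tail
        ⟨toPG_pstep_iff.2 ⟨hr, .inl rfl⟩, hw⟩⟩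

lemma lamFree_toPG (h : ∀ t ∈ C.trans, t.2.1.2 ≠ []) : (C.toPG B).LamFree := by
  intro i
  change (labelRule B ((Finite.equivFin C.Label).symm i)).2 ≠ []
  cases (Finite.equivFin C.Label).symm i with
  | apply t => exact h t.1 t.2
  | _ => exact List.cons_ne_nil _ _

end ControlledGrammar

/-! ### Programmed grammars simulate CD grammar systems -/

section Modes

variable {P : List (Rule T)} {x y : SForm T}

/-- The step count up to which a mode can tell numbers of derivation steps apart. -/
def Mode.threshold : Mode → ℕ
  | .eq k => k + 1
  | .le k => k + 1
  | .ge k => k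
  | .star => 0
  | .t => 0
  | .conj f g => max f.threshold g.threshold

lemma modeOK_min {f : Mode} {K : ℕ} (hK : f.threshold ≤ K) (c : ℕ) :
    modeOK P f (min c K) y ↔ modeOK P f c y := by
  induction f with
  | conj f g ihf ihg => exact and_congr (ihf (le_of_max_le_left hK)) (ihg (le_of_max_le_right hK))
  | _ => simp only [modeOK, Mode.threshold] at hK ⊢ <;> omega

lemma modeOK_congr_nts (h : nts x = nts y) (f : Mode) (c : ℕ) :
    modeOK P f c x ↔ modeOK P f c y := by
  induction f with
  | t => simp only [modeOK, exists_rstep_iff, h]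
  | conj f g ihf ihg => exact and_congr ihf ihg
  | _ => rfl

end Modes

/-- The multisets of at most `m` nonterminals below `B`. -/
def boundedMultisets (m B : ℕ) : Set (Multiset ℕ) := {M | M.card ≤ m ∧ ∀ a ∈ M, a < B}

lemma finite_boundedMultisets (m B : ℕ) : (boundedMultisets m B).Finite := by
  refine (Set.finite_Iic (m • Multiset.range B)).subset fun M hM => Multiset.le_iff_count.2 ?_
  intro a
  by_cases ha : a ∈ M
  · rw [Multiset.count_nsmul, Multiset.count_eq_one_of_mem (Multiset.nodup_range B)
      (Multiset.mem_range.2 (hM.2 a ha)), mul_one]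
    exact (Multiset.count_le_card a M).trans hM.1
  · simp [Multiset.count_eq_zero_of_notMem ha]

namespace CDGS

variable (G : CDGS T) (f : Mode) (m B : ℕ)

/-- The controlled grammar simulating a CD grammar system. Its state `(M, i, c)` records the
nonterminals `M` of the sentential form, the working component `i` and the number `c` of steps
it has made, capped at the threshold of the mode. Unless `i` stops, `M` must be nonzero: a
terminal word counts only when its last component has worked in the mode `f`. -/
def control : ControlledGrammar T where
  State := Multiset ℕ × Fin G.deg × ℕ
  start := G.start
  initial := {q | q.1 = {G.start} ∧ q.2.2 = 0}
  trans := {t | ∃ M i c r M' j c', t = ((M, i, c), r, M', j, c') ∧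
    M ∈ boundedMultisets m B ∧ c ≤ f.threshold ∧ r ∈ G.comp i ∧
    M' ∈ boundedMultisets m B ∧ M' = M.erase r.1 + nts r.2 ∧
    (j = i ∧ c' = min (c + 1) f.threshold ∧ M' ≠ 0 ∨
      c' = 0 ∧ ∃ y, nts y = M' ∧ modeOK (G.comp i) f (c + 1) y)}

lemma finite_trans_control : (G.control f m B).trans.Finite := by
  let S : Set (Multiset ℕ × Fin G.deg × ℕ) :=
    boundedMultisets m B ×ˢ Set.univ ×ˢ Set.Iic f.threshold
  have hS : S.Finite :=
    (finite_boundedMultisets m B).prod (Set.finite_univ.prod (Set.finite_Iic _))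
  have hR : (⋃ i, {r | r ∈ G.comp i}).Finite :=
    Set.finite_iUnion fun i => List.finite_toSet (G.comp i)
  refine (hS.prod (hR.prod hS)).subset ?_
  rintro _ ⟨M, i, c, r, M', j, c', rfl, hM, hc, hr, hM', -, hj⟩
  have hc' : c' ≤ f.threshold := by omega
  exact ⟨⟨hM, trivial, hc⟩, Set.mem_iUnion.2 ⟨i, hr⟩, hM', trivial, hc'⟩

variable {G f m B}

/-- `G.Tracks f x q` holds if the control state `q` describes a derivation of `G` in mode `f`
that has arrived at the form `x`. -/
def Tracks (G : CDGS T) (f : Mode) (x : SForm T) (q : Multiset ℕ × Fin G.deg × ℕ) : Prop :=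
  q.1 = nts x ∧
  (∃ x₀ c, Relation.ReflTransGen (G.ModeStep f) [Sum.inl G.start] x₀ ∧
    StepsN (G.comp q.2.1) c x₀ x ∧ q.2.2 = min c f.threshold) ∧
  (q.1 = 0 → Relation.TransGen (G.ModeStep f) [Sum.inl G.start] x)

lemma Tracks.step {x y : SForm T} {q q' : Multiset ℕ × Fin G.deg × ℕ} (hx : G.Tracks f x q)
    (h : (G.control f m B).Step (x, q) (y, q')) : G.Tracks f y q' := by
  obtain ⟨r, ⟨M, i, c, _, M', j, c', ⟨⟩, -, -, hri, -, hM', hj⟩, hr⟩ := h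
  obtain ⟨rfl, ⟨x₀, c₀, hx₀, hc₀, rfl⟩, -⟩ := hx
  have hMy : M' = nts y := hM'.trans hr.nts_eq_of_singleton.symm
  have hxy : RStep (G.comp i) x y := by
    obtain ⟨_, hr', huv⟩ := hr
    exact ⟨_, (List.mem_singleton.1 hr') ▸ hri, huv⟩
  have hy := hc₀.tail hxy
  obtain ⟨rfl, rfl, hne⟩ | ⟨rfl, z, hz, hmode⟩ := hj
  · exact ⟨hMy, ⟨x₀, _, hx₀, hy, by dsimp only; omega⟩, fun h0 => (hne h0).elim⟩
  · have hreach : Relation.TransGen (G.ModeStep f) [Sum.inl G.start] y := by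
      refine .tail' hx₀ ⟨i, _, hy, ?_⟩
      rw [modeOK_congr_nts (hz.trans hMy), ← modeOK_min le_rfl] at hmode
      rw [← modeOK_min le_rfl]
      convert hmode using 1
      omega
    exact ⟨hMy, ⟨y, 0, hreach.to_reflTransGen, rfl, by simp⟩, fun _ => hreach⟩

lemma lang_control_subset : (G.control f m B).lang ⊆ G.lang f := by
  rintro w ⟨q₀, ⟨hM, hc⟩, q, h⟩
  have htracks : ∀ d, Relation.ReflTransGen (G.control f m B).Step ([Sum.inl G.start], q₀) d →
      G.Tracks f d.1 d.2 := by
    intro d hd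
    induction hd with
    | refl =>
      exact ⟨hM, ⟨_, 0, .refl, rfl, hc.trans (Nat.zero_min _).symm⟩, fun h0 => by simp_all⟩
    | tail _ hcd ih => exact ih.step hcd
  have hq := htracks _ h
  exact hq.2.2 (hq.1.trans (nts_map_inr w))

lemma boundedMultisets_of_rstep (hB : ∀ i, ∀ r ∈ G.comp i, ∀ a ∈ nts r.2, a < B) {i : Fin G.deg}
    {x y : SForm T} (hx : nts x ∈ boundedMultisets m B) (h : RStep (G.comp i) x y)
    (hy : ntCount y ≤ m) : nts y ∈ boundedMultisets m B := by
  refine ⟨(ntCount_eq_card_nts y).symm.trans_le hy, ?_⟩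
  obtain ⟨r, hr, u, v, rfl, rfl⟩ := h
  intro a ha
  simp only [nts_append, Multiset.mem_add] at ha
  obtain (ha | ha) | ha := ha
  · exact hx.2 a (by simp [ha])
  · exact hB i r hr a ha
  · exact hx.2 a (by simp [ha])

lemma control_reflTransGen_of_stepsNB (hB : ∀ i, ∀ r ∈ G.comp i, ∀ a ∈ nts r.2, a < B)
    {i : Fin G.deg} {n c : ℕ} {x y : SForm T} (hx : nts x ∈ boundedMultisets m B)
    (h : StepsNB (G.comp i) m (n + 1) x y) (hy : modeOK (G.comp i) f (c + (n + 1)) y)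
    (j : Fin G.deg) :
    nts y ∈ boundedMultisets m B ∧
    Relation.ReflTransGen (fun c d => (G.control f m B).Step c d ∧ ntCount d.1 ≤ m)
      (x, nts x, i, min c f.threshold) (y, nts y, j, 0) := by
  induction n generalizing x c with
  | zero =>
    obtain ⟨_, hxy, hym, rfl⟩ := h
    have hyB := boundedMultisets_of_rstep hB hx hxy hym
    obtain ⟨r, hri, hr⟩ := hxy.exists_singleton
    refine ⟨hyB, .single ⟨⟨r, ⟨_, i, _, r, _, j, _, rfl, hx, min_le_right _ _, hri, hyB,
      hr.nts_eq_of_singleton, .inr ⟨rfl, _, rfl, ?_⟩⟩, hr⟩, hym⟩⟩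
    rw [← modeOK_min le_rfl] at hy ⊢
    convert hy using 1
    omega
  | succ n ih =>
    obtain ⟨z, hxz, hzm, hzy⟩ := h
    have hzB := boundedMultisets_of_rstep hB hx hxz hzm
    have hz0 : nts z ≠ 0 := by
      obtain ⟨_, hz, -⟩ := hzy
      obtain ⟨_, -, hmem⟩ := exists_rstep_iff.1 ⟨_, hz⟩
      exact fun h0 => by simp [h0] at hmem
    obtain ⟨r, hri, hr⟩ := hxz.exists_singleton
    obtain ⟨hyB, hreach⟩ := ih (c := c + 1) hzB hzy (by rwa [Nat.add_right_comm])
    refine ⟨hyB, .head ⟨⟨r, ⟨_, i, _, r, _, i, _, rfl, hx, min_le_right _ _, hri, hzB,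
      hr.nts_eq_of_singleton, .inl ⟨rfl, ?_, hz0⟩⟩, hr⟩, hzm⟩ hreach⟩
    omega

lemma langB_subset_langB_control (hB : ∀ i, ∀ r ∈ G.comp i, ∀ a ∈ nts r.2, a < B)
    (hstart : G.start < B) : G.langB f m ⊆ (G.control f m B).langB m := by
  rintro w ⟨hm, h⟩
  have hstartB : nts [(Sum.inl G.start : Symb T)] ∈ boundedMultisets m B :=
    ⟨by rwa [← ntCount_eq_card_nts], by simpa using hstart⟩
  suffices H : ∀ x, Relation.ReflTransGen (G.ModeStepB f m) [Sum.inl G.start] x →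
      nts x ∈ boundedMultisets m B ∧ ∀ j : Fin G.deg, ∃ q₀ ∈ (G.control f m B).initial,
        Relation.ReflTransGen (fun c d => (G.control f m B).Step c d ∧ ntCount d.1 ≤ m)
          ([Sum.inl G.start], q₀) (x, nts x, j, 0) by
    obtain ⟨_, ⟨i, -⟩, -⟩ := Relation.TransGen.head'_iff.1 h
    obtain ⟨q₀, hq₀, hq⟩ := (H _ h.to_reflTransGen).2 i
    exact ⟨q₀, hq₀, _, hq⟩
  intro x hx
  induction hx with
  | refl => exact ⟨hstartB, fun j => ⟨(_, j, 0), ⟨rfl, rfl⟩, .refl⟩⟩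
  | tail _ hxy ih =>
    obtain ⟨i, n, hsteps, hmode⟩ := hxy
    obtain _ | n := n
    · exact (show _ = _ from hsteps) ▸ ih
    have hy := control_reflTransGen_of_stepsNB (c := 0) hB ih.1 hsteps (by rwa [Nat.zero_add])
    obtain ⟨q₀, hq₀, hreach⟩ := ih.2 i
    exact ⟨(hy i).1, fun j => ⟨q₀, hq₀, hreach.trans (by simpa using (hy j).2)⟩⟩

end CDGS

theorem CDFamFinInf_subset_PFamFin (lf : Bool) (f : Mode) :
    CDFamFinInf T lf f ⊆ PFamFin T lf false := by
  rintro L ⟨m, hm, G, hlf, hL, hind⟩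
  obtain ⟨B, hstart, hB⟩ := exists_symbol_bound G.start G.comp
  let C := G.control f m B
  have : Finite C.trans := CDGS.finite_trans_control G f m B
  have hfresh : ∀ t ∈ C.trans, t.2.1.1 ≠ B := by
    rintro _ ⟨M, i, c, r, M', j, c', rfl, -, -, hr, -⟩
    exact (hB i r hr).1.ne
  have hle : (C.toPG B).lang ⊆ G.lang f :=
    (ControlledGrammar.lang_toPG_subset hfresh).trans CDGS.lang_control_subset
  have hge : G.lang f ⊆ (C.toPG B).langB m :=
    (hind.trans (CDGS.langB_subset_langB_control (fun i r hr => (hB i r hr).2) hstart)).trans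
      (ControlledGrammar.langB_subset_langB_toPG hm)
  have heq : (C.toPG B).lang = G.lang f := hle.antisymm (hge.trans (PG.langB_subset_lang _ m))
  refine ⟨m, hm, C.toPG B, fun h => ControlledGrammar.lamFree_toPG ?_, fun _ _ => rfl, heq ▸ hL,
    heq ▸ hge⟩
  rintro _ ⟨M, i, c, r, M', j, c', rfl, -, -, hr, -⟩
  exact hlf h i r hr

/-! ### Separated matrix grammars -/

/-- A matrix of two rules, `ctrl → ctrl'` and `site → rhs`, to be applied together. -/
structure PairRule (T : Type) where
  ctrl : ℕ
  ctrl' : ℕ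
  site : ℕ
  rhs : SForm T

/-- The joint application of the two rules of a matrix. -/
def PairRule.apply (p : PairRule T) (x : SForm T) : SForm T :=
  replace p.site p.rhs (replace p.ctrl (atom p.ctrl') x)

/-- The symbols of the two rules are disjoint except for `rhs` containing `ctrl'`. -/
structure PairRule.Proper (p : PairRule T) : Prop where
  ctrl_ne_site : p.ctrl ≠ p.site
  ctrl'_ne_ctrl : p.ctrl' ≠ p.ctrl
  ctrl'_ne_site : p.ctrl' ≠ p.site
  ctrl_notMem_rhs : p.ctrl ∉ nts p.rhs
  site_notMem_rhs : p.site ∉ nts p.rhs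

/-- All symbols of the two rules are below `B`. -/
structure PairRule.SymbolsBelow (p : PairRule T) (B : ℕ) : Prop where
  ctrl_lt : p.ctrl < B
  ctrl'_lt : p.ctrl' < B
  site_lt : p.site < B
  rhs_lt : ∀ a ∈ nts p.rhs, a < B

/-- A matrix grammar with matrices of length one (`singles`) and two (`pairs`), and with a
distinguished set of master nonterminals, which carry the control information; the intermediate
notion between programmed grammars of finite index and CD grammar systems. -/
structure MatrixGrammar (T : Type) where
  start : ℕ
  masters : Finset ℕ
  singles : List (Rule T)
  pairs : List (PairRule T)

namespace MatrixGrammar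

variable (H : MatrixGrammar T)

/-- The application of one matrix. -/
inductive Step : SForm T → SForm T → Prop
  | single {r x} (hr : r ∈ H.singles) (hx : r.1 ∈ nts x) : Step x (replace r.1 r.2 x)
  | pair {p x} (hp : p ∈ H.pairs) (hc : p.ctrl ∈ nts x) (hs : p.site ∈ nts x) :
    Step x (p.apply x)

/-- The sentential forms of a matrix grammar. -/
def Reachable (x : SForm T) : Prop := Relation.ReflTransGen H.Step [Sum.inl H.start] x

/-- The language of a matrix grammar. -/
def lang : Set (List T) := {w | H.Reachable (w.map Sum.inr)}

/-- The words derived with at most `m` nonterminals in each sentential form after the first. -/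
def langB (m : ℕ) : Set (List T) :=
  {w | Relation.ReflTransGen (fun x y => H.Step x y ∧ ntCount y ≤ m)
    [Sum.inl H.start] (w.map Sum.inr)}

/-- No erasing rules. -/
def LamFree : Prop := (∀ r ∈ H.singles, r.2 ≠ []) ∧ ∀ p ∈ H.pairs, p.rhs ≠ []

/-- All symbols of the grammar are below `B`. -/
structure SymbolsBelow (B : ℕ) : Prop where
  start_lt : H.start < B
  masters_lt : ∀ a ∈ H.masters, a < B
  single_lt : ∀ r ∈ H.singles, r.1 < B ∧ ∀ a ∈ nts r.2, a < B
  pair_lt : ∀ p ∈ H.pairs, p.SymbolsBelow B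

/-- The disjointness conditions under which the components of a CD grammar system can simulate
the matrices one at a time: sentential forms have pairwise distinct nonterminals and at most one
master, a matrix does not reproduce the symbols it rewrites, the `ctrl` symbol of a pair comes
with its `site`, and `site` comes with a master that does not occur in `rhs`. -/
structure Separated : Prop where
  nodup {x} : H.Reachable x → (nts x).Nodup
  master_unique {x a a'} : H.Reachable x → a ∈ H.masters → a' ∈ H.masters → a ∈ nts x →
    a' ∈ nts x → a = a'
  single_notMem {r} : r ∈ H.singles → r.1 ∉ nts r.2
  ctrl_mem {p} : p ∈ H.pairs → p.ctrl ∈ H.masters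
  site_notMem {p} : p ∈ H.pairs → p.site ∉ H.masters
  proper {p} : p ∈ H.pairs → p.Proper
  site_mem {x p} : H.Reachable x → p ∈ H.pairs → p.ctrl ∈ nts x → p.site ∈ nts x
  exists_guard {x p} : H.Reachable x → p ∈ H.pairs → p.site ∈ nts x →
    ∃ a ∈ H.masters, a ∈ nts x ∧ a ∉ nts p.rhs

variable {H}

lemma exists_symbolsBelow (H : MatrixGrammar T) : ∃ B, H.SymbolsBelow B := by
  have hsingles := (List.finite_toSet H.singles).image fun r => Sum.inl r.1 :: r.2
  have hpairs := (List.finite_toSet H.pairs).image fun p =>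
    Sum.inl p.ctrl :: Sum.inl p.ctrl' :: Sum.inl p.site :: p.rhs
  have hmasters := H.masters.finite_toSet.image (atom : ℕ → SForm T)
  obtain ⟨B, hB⟩ := exists_nts_lt
    (((hsingles.union hpairs).union hmasters).insert [Sum.inl H.start])
  have hsingle r (hr : r ∈ H.singles) := hB _ (.inr (.inl (.inl ⟨r, hr, rfl⟩)))
  have hpair p (hp : p ∈ H.pairs) := hB _ (.inr (.inl (.inr ⟨p, hp, rfl⟩)))
  simp only [nts_inl_cons, Multiset.mem_cons, forall_eq_or_imp] at hsingle hpair
  exact ⟨B, hB _ (.inl rfl) _ (by simp), fun a ha => hB _ (.inr (.inr ⟨a, ha, rfl⟩)) a (by simp),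
    hsingle, fun p hp => let ⟨h₁, h₂, h₃, h₄⟩ := hpair p hp; ⟨h₁, h₂, h₃, h₄⟩⟩

lemma SymbolsBelow.nts_lt {B : ℕ} (hB : H.SymbolsBelow B) {x : SForm T} (hx : H.Reachable x) :
    ∀ a ∈ nts x, a < B := by
  induction hx with
  | refl => simpa using hB.start_lt
  | tail _ hstep ih =>
    intro a ha
    cases hstep with
    | single hr hx =>
      obtain ⟨ha, -⟩ | ⟨-, ha⟩ := mem_nts_replace.1 ha
      · exact ih a ha
      · exact (hB.single_lt _ hr).2 a ha
    | pair hp hc hs =>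
      obtain ⟨-, hctrl', -, hrhs⟩ := hB.pair_lt _ hp
      simp only [PairRule.apply, mem_nts_replace, nts_atom, Multiset.mem_singleton] at ha
      obtain ⟨⟨ha, -⟩ | ⟨-, rfl⟩, -⟩ | ⟨-, ha⟩ := ha
      exacts [ih a ha, hctrl', hrhs a ha]

end MatrixGrammar

section ListComponents

/-- The CD grammar system with a given list of components. -/
def CDGS.ofList (s : ℕ) (Ps : List (List (Rule T))) : CDGS T where
  start := s
  deg := Ps.length
  comp := Ps.get

variable {s : ℕ} {Ps : List (List (Rule T))} {f : Mode} {m : ℕ} {x y : SForm T}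

lemma CDGS.modeStep_ofList_iff : (CDGS.ofList s Ps).ModeStep f x y ↔
    ∃ P ∈ Ps, ∃ n, StepsN P n x y ∧ modeOK P f n y := by
  rw [List.exists_mem_iff_get]
  rfl

lemma CDGS.modeStepB_ofList_iff : (CDGS.ofList s Ps).ModeStepB f m x y ↔
    ∃ P ∈ Ps, ∃ n, StepsNB P m n x y ∧ modeOK P f n y := by
  rw [List.exists_mem_iff_get]
  rfl

lemma CDGS.lamFree_ofList (h : ∀ P ∈ Ps, ∀ r ∈ P, r.2 ≠ []) : (CDGS.ofList s Ps).LamFree :=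
  fun i => h _ (List.get_mem Ps i)

lemma lang_subset_of_invariant {G : CDGS T} {L : Set (List T)} (I : SForm T → Prop)
    (hstart : I [Sum.inl G.start]) (hstep : ∀ x y, I x → G.ModeStep f x y → I y)
    (hL : ∀ w : List T, I (w.map Sum.inr) → w ∈ L) : G.lang f ⊆ L := by
  refine fun w hw => hL w ?_
  have hw' := Relation.TransGen.to_reflTransGen hw
  generalize w.map Sum.inr = y at hw'
  induction hw' with
  | refl => exact hstart
  | tail _ h ih => exact hstep _ _ ih h

lemma MatrixGrammar.langB_subset_langB {H : MatrixGrammar T} (hm : 1 ≤ m)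
    (h : ∀ x y, H.Reachable x → H.Step x y → ntCount x ≤ m → ntCount y ≤ m →
      Relation.ReflTransGen ((CDGS.ofList H.start Ps).ModeStepB f m) x y) :
    H.langB m ⊆ (CDGS.ofList H.start Ps).langB f m := by
  intro w hw
  have hsim : ∀ y, Relation.ReflTransGen (fun x y => H.Step x y ∧ ntCount y ≤ m)
      [Sum.inl H.start] y → H.Reachable y ∧ ntCount y ≤ m ∧
        Relation.ReflTransGen ((CDGS.ofList H.start Ps).ModeStepB f m) [Sum.inl H.start] y := by
    intro y hy
    induction hy with
    | refl => exact ⟨.refl, hm, .refl⟩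
    | tail _ hxy ih =>
      exact ⟨ih.1.tail hxy.1, hxy.2, ih.2.2.trans (h _ _ ih.1 hxy.1 ih.2.1 hxy.2)⟩
  refine ⟨hm, ?_⟩
  obtain heq | htrans := Relation.reflTransGen_iff_eq_or_transGen.1 (hsim _ hw).2.2
  · exact absurd (congrArg nts heq) (by simp)
  · exact htrans

end ListComponents

/-! ### Components for the matrices -/

section RewriteComponent

variable {A : ℕ} {w x y : SForm T} {F : List ℕ} {m n : ℕ}

/-- The component `{A → A, A → w} ∪ {a → a | a ∈ F}`. In terminating modes it replaces `A` by `w`,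
unless this leaves a symbol of `F` in the form. -/
def rewriteComp (A : ℕ) (w : SForm T) (F : List ℕ) : List (Rule T) :=
  (A, atom A) :: (A, w) :: F.map fun a => (a, atom a)

lemma rewriteComp_lamFree (hw : w ≠ []) : ∀ r ∈ rewriteComp A w F, r.2 ≠ [] := by
  simp [rewriteComp, hw, atom]

lemma forall_rewriteComp_notMem_iff :
    (∀ r ∈ rewriteComp A w F, r.1 ∉ nts y) ↔ A ∉ nts y ∧ ∀ a ∈ F, a ∉ nts y := by
  simp [rewriteComp]

lemma stepsNB_rewriteComp (hn : 1 ≤ n) (hA : (nts x).count A = 1)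
    (hxm : ntCount x ≤ m) (hym : ntCount (replace A w x) ≤ m) :
    StepsNB (rewriteComp A w F) m n x (replace A w x) := by
  obtain ⟨n, rfl⟩ := Nat.exists_eq_add_of_le' hn
  have hloop : RStep (rewriteComp A w F) x x :=
    .refl_of_loop (List.mem_cons_self ..) (Multiset.one_le_count_iff_mem.1 hA.ge)
  have hstep : RStep (rewriteComp A w F) x (replace A w x) :=
    rstep_replace (by simp [rewriteComp]) hA
  exact (StepsNB.of_refl hloop hxm n).tail hstep hym

lemma eq_replace_of_stepsN_rewriteComp (hw : A ∉ nts w) (h : StepsN (rewriteComp A w F) m x y)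
    (hy : ∀ r ∈ rewriteComp A w F, r.1 ∉ nts y) :
    y = replace A w x ∧ ∀ a ∈ F, a ∉ nts y := by
  refine ⟨subst_eq_of_stepsN ?_ ?_ h hy, (forall_rewriteComp_notMem_iff.1 hy).2⟩
  · have hatom a : subst (Function.update atom A w) (atom a) = Function.update atom A w a :=
      List.append_nil _
    have hword : subst (Function.update atom A w) w = w := replace_of_notMem hw
    simp [rewriteComp, hatom, hword]
  · exact fun a ha => Function.update_of_ne (ha (A, w) (by simp [rewriteComp])).symm _ _

lemma eq_or_eq_replace_of_stepsN_rewriteComp_nil (hw : A ∉ nts w) (hx : (nts x).Nodup)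
    (h : StepsN (rewriteComp A w []) m x y) : y = x ∨ A ∈ nts x ∧ y = replace A w x := by
  induction m with
  | zero => exact .inl (Eq.symm h)
  | succ m ih =>
    obtain ⟨z, hxz, hzy⟩ := h
    obtain ⟨r, hr, hrx, rfl⟩ := hxz.exists_eq_replace hx
    obtain rfl | rfl : r = (A, atom A) ∨ r = (A, w) := by simpa [rewriteComp] using hr
    · exact ih (by simpa [replace] using hzy)
    · refine .inr ⟨hrx, hzy.eq_of_forall_notMem (forall_rewriteComp_notMem_iff.2 ⟨?_, by simp⟩)⟩
      simp [mem_nts_replace, hw]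

end RewriteComponent

/-! ### Simulation of matrices in modes requiring at least two steps -/

namespace PairRule

variable {p : PairRule T} {n B : ℕ}

/-- The symbols `c 0 = ctrl`, `c 1 = B + 1`, …, `c n = ctrl'` that a chain of `n` rules passes
through. -/
def chainSymbol (p : PairRule T) (n B j : ℕ) : ℕ :=
  if j = 0 then p.ctrl else if j = n then p.ctrl' else B + j

/-- The component simulating a pair by exactly `n + 1` steps: a chain of `n` rules from `ctrl` to
`ctrl'` and the rule `site → rhs`. -/
def chainComp (p : PairRule T) (n B : ℕ) : List (Rule T) :=
  (p.site, p.rhs) ::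
    (List.range n).map fun j => (p.chainSymbol n B j, atom (p.chainSymbol n B (j + 1)))

/-- The number of steps that `chainComp` can make on a symbol. -/
def weight (p : PairRule T) (n B a : ℕ) : ℕ :=
  if a = p.ctrl then n else if a = p.site then 1 else if B < a then B + n - a else 0

/-- What `chainComp` makes of a symbol. -/
def chainResult (p : PairRule T) (n B a : ℕ) : SForm T :=
  if a = p.site then p.rhs
  else if a = p.ctrl ∨ B < a ∧ a < B + n then atom p.ctrl' else atom a

lemma chainComp_lamFree (h : p.rhs ≠ []) : ∀ r ∈ p.chainComp n B, r.2 ≠ [] := by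
  simp [chainComp, h, atom]

lemma forall_chainComp_iff {q : Rule T → Prop} : (∀ r ∈ p.chainComp n B, q r) ↔
    q (p.site, p.rhs) ∧
      ∀ j < n, q (p.chainSymbol n B j, atom (p.chainSymbol n B (j + 1))) := by
  simp [chainComp]

lemma weight_chainSymbol (hp : p.Proper) (hB : p.SymbolsBelow B) {j : ℕ}
    (hj : j ≤ n) : p.weight n B (p.chainSymbol n B j) = n - j := by
  have := hp.ctrl'_ne_ctrl
  have := hp.ctrl'_ne_site
  have := hB.ctrl_lt
  have := hB.ctrl'_lt
  have := hB.site_lt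
  grind [weight, chainSymbol]

lemma sum_weight (hp : p.Proper) {M : Multiset ℕ} (hM : ∀ a ∈ M, a < B) :
    (M.map (p.weight n B)).sum = n * M.count p.ctrl + M.count p.site := by
  induction M using Multiset.induction with
  | empty => simp
  | cons a M ih =>
    have ha : a < B := hM a (Multiset.mem_cons_self a M)
    have := hp.ctrl_ne_site
    rw [Multiset.map_cons, Multiset.sum_cons, ih fun c hc => hM c (Multiset.mem_cons_of_mem hc)]
    simp only [weight, Multiset.count_cons]
    grind

lemma weight_eq_of_mem_chainComp (hp : p.Proper) (hB : p.SymbolsBelow B) :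
    ∀ r ∈ p.chainComp n B, p.weight n B r.1 = ((nts r.2).map (p.weight n B)).sum + 1 := by
  refine forall_chainComp_iff.2 ⟨?_, fun j hj => ?_⟩
  · rw [sum_weight hp hB.rhs_lt, Multiset.count_eq_zero_of_notMem hp.ctrl_notMem_rhs,
      Multiset.count_eq_zero_of_notMem hp.site_notMem_rhs]
    simp [weight, hp.ctrl_ne_site.symm]
  · rw [nts_atom, Multiset.map_singleton, Multiset.sum_singleton,
      weight_chainSymbol hp hB hj.le, weight_chainSymbol hp hB hj]
    omega

lemma chainResult_chainSymbol (hp : p.Proper) (hB : p.SymbolsBelow B) {j : ℕ}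
    (hj : j ≤ n) : p.chainResult n B (p.chainSymbol n B j) = atom p.ctrl' := by
  have := hp.ctrl'_ne_site
  have := hp.ctrl_ne_site
  have := hB.site_lt
  grind [chainResult, chainSymbol]

lemma subst_chainResult (hp : p.Proper) {x : SForm T} (hx : ∀ a ∈ nts x, a < B) :
    subst (p.chainResult n B) x = p.apply x := by
  rw [apply, replace, replace, subst_subst]
  refine subst_congr fun a ha => ?_
  have := hx a ha
  have := hp.ctrl_ne_site
  have := hp.ctrl'_ne_site
  by_cases hc : a = p.ctrl
  · obtain rfl := hc
    simp_all [chainResult, atom]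
  by_cases hs : a = p.site
  · obtain rfl := hs
    simp_all [chainResult, atom]
  · have : ¬ B < a := by omega
    simp_all [chainResult, atom]

lemma stepsN_chainComp (hp : p.Proper) (hB : p.SymbolsBelow B) (hn : 1 ≤ n) {m : ℕ}
    {x y : SForm T} (hx : (nts x).Nodup) (hxB : ∀ a ∈ nts x, a < B) (hm : n + 1 ≤ m)
    (h : StepsN (p.chainComp n B) m x y) :
    p.ctrl ∈ nts x ∧ p.site ∈ nts x ∧ y = p.apply x := by
  have hweight := weight_eq_of_mem_chainComp hp hB (n := n)
  have hsum := h.sum_map_nts hweight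
  rw [sum_weight hp hxB, Multiset.count_eq_of_nodup hx, Multiset.count_eq_of_nodup hx] at hsum
  obtain ⟨hc, hs, hzero⟩ : p.ctrl ∈ nts x ∧ p.site ∈ nts x ∧
      ((nts y).map (p.weight n B)).sum = 0 := by
    split_ifs at hsum with hc hs hs
    · exact ⟨hc, hs, by omega⟩
    all_goals omega
  refine ⟨hc, hs, ?_⟩
  rw [← subst_chainResult (n := n) hp hxB]
  refine subst_eq_of_stepsN ?_ ?_ h ?_
  · refine forall_chainComp_iff.2 ⟨?_, fun j hj => ?_⟩
    · have hatom : ∀ a ∈ nts p.rhs, p.chainResult n B a = atom a := by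
        intro a ha
        have := hB.rhs_lt a ha
        have := ne_of_mem_of_not_mem ha hp.ctrl_notMem_rhs
        have := ne_of_mem_of_not_mem ha hp.site_notMem_rhs
        grind [chainResult]
      rw [subst_congr hatom, subst_atom, chainResult, if_pos rfl]
    · rw [chainResult_chainSymbol hp hB hj.le,
        ← chainResult_chainSymbol hp hB (Nat.succ_le_iff.2 hj)]
      exact List.append_nil _
  · intro a ha
    obtain ⟨hsite, hchain⟩ := forall_chainComp_iff.1 ha
    have := hchain (a - B)
    have := hchain 0
    grind [chainResult, chainSymbol]
  · intro r hr hmem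
    have := Multiset.sum_eq_zero_iff.1 hzero _ (Multiset.mem_map_of_mem _ hmem)
    exact absurd (hweight r hr) (by omega)

lemma stepsNB_chain {m : ℕ} {u v : SForm T} (hm : ntCount (u ++ Sum.inl p.ctrl :: v) ≤ m) {j : ℕ}
    (hj : j ≤ n) : StepsNB (p.chainComp n B) m j (u ++ Sum.inl p.ctrl :: v)
      (u ++ Sum.inl (p.chainSymbol n B j) :: v) := by
  induction j with
  | zero => rfl
  | succ j ih =>
    refine (ih (Nat.le_of_succ_le hj)).tail ⟨(_, atom (p.chainSymbol n B (j + 1))), ?_, u, v, rfl,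
      by simp [atom]⟩ ?_
    · exact List.mem_cons_of_mem _ (List.mem_map.2 ⟨j, List.mem_range.2 hj, rfl⟩)
    · simpa [ntCount_eq_card_nts] using hm

lemma stepsNB_chainComp (hp : p.Proper) (hn : 1 ≤ n) {m : ℕ} {x : SForm T} (hx : (nts x).Nodup)
    (hc : p.ctrl ∈ nts x) (hs : p.site ∈ nts x) (hxm : ntCount x ≤ m)
    (hym : ntCount (p.apply x) ≤ m) : StepsNB (p.chainComp n B) m (n + 1) x (p.apply x) := by
  have hscount := Multiset.count_eq_one_of_mem hx hs
  obtain ⟨u, v, rfl, hu, hv⟩ :=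
    exists_split_of_count_eq_one (Multiset.count_eq_one_of_mem hx hc)
  have hchain := stepsNB_chain (p := p) (B := B) hxm le_rfl (n := n)
  rw [show p.chainSymbol n B n = p.ctrl' by simp [chainSymbol, Nat.one_le_iff_ne_zero.1 hn]]
    at hchain
  have happly : p.apply (u ++ Sum.inl p.ctrl :: v) =
      replace p.site p.rhs (u ++ Sum.inl p.ctrl' :: v) := by
    rw [apply, replace_append_cons hu hv]
    simp [atom]
  rw [happly] at hym ⊢
  refine hchain.tail (rstep_replace (List.mem_cons_self ..) ?_) hym
  simpa [Multiset.count_cons, hp.ctrl_ne_site.symm, hp.ctrl'_ne_site.symm] using hscount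

end PairRule

namespace MatrixGrammar

variable {H : MatrixGrammar T} {f : Mode} {k m B : ℕ}

/-- The components simulating the matrices in a mode that requires at least `k` steps. -/
def countingComps (H : MatrixGrammar T) (k B : ℕ) : List (List (Rule T)) :=
  H.singles.map (fun r => rewriteComp r.1 r.2 []) ++ H.pairs.map fun p => p.chainComp (k - 1) B

lemma lang_countingComps_subset (hH : H.Separated) (hB : H.SymbolsBelow B) (hk : 2 ≤ k)
    (hf : ∀ (P : List (Rule T)) n y, modeOK P f n y → k ≤ n) :
    (CDGS.ofList H.start (H.countingComps k B)).lang f ⊆ H.lang := by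
  refine lang_subset_of_invariant H.Reachable .refl (fun x y hx hxy => ?_) fun w hw => hw
  obtain ⟨P, hP, n, hsteps, hmode⟩ := CDGS.modeStep_ofList_iff.1 hxy
  have hkn := hf P n y hmode
  obtain hP | hP := List.mem_append.1 hP
  · obtain ⟨r, hr, rfl⟩ := List.mem_map.1 hP
    obtain rfl | ⟨hrx, rfl⟩ := eq_or_eq_replace_of_stepsN_rewriteComp_nil (hH.single_notMem hr)
      (hH.nodup hx) hsteps
    · exact hx
    · exact hx.tail (.single hr hrx)
  · obtain ⟨p, hp, rfl⟩ := List.mem_map.1 hP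
    obtain ⟨hc, hs, rfl⟩ := PairRule.stepsN_chainComp (hH.proper hp) (hB.pair_lt p hp)
      (by omega) (hH.nodup hx) (hB.nts_lt hx) (by omega) hsteps
    exact hx.tail (.pair hp hc hs)

lemma langB_subset_langB_countingComps (hH : H.Separated) (hk : 2 ≤ k) (hm : 1 ≤ m)
    (hf : ∀ (P : List (Rule T)) y, modeOK P f k y) :
    H.langB m ⊆ (CDGS.ofList H.start (H.countingComps k B)).langB f m := by
  refine langB_subset_langB hm fun x y hx hxy hxm hym => ?_
  refine .single (CDGS.modeStepB_ofList_iff.2 ?_)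
  cases hxy with
  | @single r _ hr hrx =>
    exact ⟨_, List.mem_append_left _ (List.mem_map.2 ⟨r, hr, rfl⟩), k,
      stepsNB_rewriteComp (by omega) (Multiset.count_eq_one_of_mem (hH.nodup hx) hrx) hxm hym,
      hf _ _⟩
  | @pair p _ hp hc hs =>
    refine ⟨_, List.mem_append_right _ (List.mem_map.2 ⟨p, hp, rfl⟩), k, ?_, hf _ _⟩
    have hsteps := PairRule.stepsNB_chainComp (B := B) (n := k - 1) (hH.proper hp) (by omega)
      (hH.nodup hx) hc hs hxm hym
    rwa [Nat.sub_add_cancel (by omega)] at hsteps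

theorem exists_cdgs_of_counting (hH : H.Separated) (hk : 2 ≤ k)
    (hf : ∀ (P : List (Rule T)) n y, modeOK P f n y → k ≤ n)
    (hfk : ∀ (P : List (Rule T)) y, modeOK P f k y) :
    ∃ G : CDGS T, (H.LamFree → G.LamFree) ∧ G.lang f ⊆ H.lang ∧
      ∀ m, 1 ≤ m → H.langB m ⊆ G.langB f m := by
  obtain ⟨B, hB⟩ := H.exists_symbolsBelow
  refine ⟨CDGS.ofList H.start (H.countingComps k B), fun hlam => CDGS.lamFree_ofList ?_,
    lang_countingComps_subset hH hB hk hf,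
    fun m hm => langB_subset_langB_countingComps hH hk hm hfk⟩
  intro P hP
  obtain hP | hP := List.mem_append.1 hP
  · obtain ⟨r, hr, rfl⟩ := List.mem_map.1 hP
    exact rewriteComp_lamFree (hlam.1 r hr)
  · obtain ⟨p, hp, rfl⟩ := List.mem_map.1 hP
    exact PairRule.chainComp_lamFree (hlam.2 p hp)

end MatrixGrammar

/-! ### Simulation of matrices in terminating modes -/

namespace MatrixGrammar

variable {H : MatrixGrammar T} {B : ℕ} {i j : Fin H.pairs.length} {x y : SForm T}

/-- The symbols `B + j` by which the components of a pair announce that they are active. -/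
def tokens (H : MatrixGrammar T) (B : ℕ) : List ℕ := List.range' B H.pairs.length

/-- The tokens of the pairs other than `i`. -/
def otherTokens (H : MatrixGrammar T) (B : ℕ) (i : Fin H.pairs.length) : List ℕ :=
  (H.tokens B).filter (· ≠ B + i)

/-- The masters that do not occur in the right-hand side `rhs` of a pair. -/
def guards (H : MatrixGrammar T) (p : PairRule T) : Finset ℕ :=
  {a ∈ H.masters | a ∉ nts p.rhs}

/-- The component replacing `ctrl` by the token of the pair `i`. -/
def openComp (H : MatrixGrammar T) (B : ℕ) (i : Fin H.pairs.length) : List (Rule T) :=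
  rewriteComp H.pairs[i].ctrl (atom (B + i)) (H.otherTokens B i)

/-- The component rewriting the `site` of the pair `i`; the guards block it while `ctrl` has not
been replaced by the token. -/
noncomputable def siteComp (H : MatrixGrammar T) (B : ℕ) (i : Fin H.pairs.length) : List (Rule T) :=
  rewriteComp H.pairs[i].site H.pairs[i].rhs (H.otherTokens B i ++ (H.guards H.pairs[i]).toList)

/-- The component replacing the token of the pair `i` by `ctrl'`. -/
def closeComp (H : MatrixGrammar T) (B : ℕ) (i : Fin H.pairs.length) : List (Rule T) :=
  rewriteComp (B + i) (atom H.pairs[i].ctrl') [H.pairs[i].site]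

/-- The components simulating the matrices in terminating modes. -/
noncomputable def terminatingComps (H : MatrixGrammar T) (B : ℕ) : List (List (Rule T)) :=
  H.singles.map (fun r => rewriteComp r.1 r.2 (H.tokens B)) ++
    (List.finRange H.pairs.length).flatMap fun i =>
      [H.openComp B i, H.siteComp B i, H.closeComp B i]

lemma mem_terminatingComps {P : List (Rule T)} : P ∈ H.terminatingComps B ↔
    (∃ r ∈ H.singles, P = rewriteComp r.1 r.2 (H.tokens B)) ∨
      ∃ i, P = H.openComp B i ∨ P = H.siteComp B i ∨ P = H.closeComp B i := by
  simp [terminatingComps, eq_comm]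

/-- `x` after `ctrl` of the pair `i` has been replaced by the token. -/
def opened (H : MatrixGrammar T) (B : ℕ) (i : Fin H.pairs.length) (x : SForm T) : SForm T :=
  replace H.pairs[i].ctrl (atom (B + i)) x

/-- `opened H B i x` after the `site` of the pair `i` has been rewritten. -/
def rewritten (H : MatrixGrammar T) (B : ℕ) (i : Fin H.pairs.length) (x : SForm T) : SForm T :=
  replace H.pairs[i].site H.pairs[i].rhs (H.opened B i x)

/-- The sentential forms of the simulating CD grammar system: those of the matrix grammar and the
intermediate forms of the application of a pair. -/
inductive Phase (H : MatrixGrammar T) (B : ℕ) : SForm T → Prop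
  | idle {x : SForm T} (hx : H.Reachable x) : Phase H B x
  | opened {x : SForm T} (i : Fin H.pairs.length) (hx : H.Reachable x)
    (hc : H.pairs[i].ctrl ∈ nts x) : Phase H B (H.opened B i x)
  | rewritten {x : SForm T} (i : Fin H.pairs.length) (hx : H.Reachable x)
    (hc : H.pairs[i].ctrl ∈ nts x) : Phase H B (H.rewritten B i x)

lemma SymbolsBelow.pairs_getElem (hB : H.SymbolsBelow B) (i : Fin H.pairs.length) :
    H.pairs[i].SymbolsBelow B :=
  hB.pair_lt _ (List.getElem_mem i.2)

lemma Separated.proper_getElem (hH : H.Separated) (i : Fin H.pairs.length) :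
    H.pairs[i].Proper :=
  hH.proper (List.getElem_mem i.2)

lemma mem_otherTokens {a : ℕ} : a ∈ H.otherTokens B i ↔ ∃ j ≠ i, a = B + j := by
  simp only [otherTokens, tokens, List.mem_filter, List.mem_range'_1, decide_eq_true_eq]
  constructor
  · rintro ⟨⟨hBa, ha⟩, hai⟩
    exact ⟨⟨a - B, by omega⟩, fun h => hai (by simp [← h, hBa]), by simp [hBa]⟩
  · rintro ⟨j, hji, rfl⟩
    exact ⟨⟨by omega, by omega⟩, fun h => hji (Fin.ext (by omega))⟩

lemma token_mem_opened (hc : H.pairs[i].ctrl ∈ nts x) : B + i ∈ nts (H.opened B i x) :=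
  mem_nts_replace.2 (.inr ⟨hc, by simp⟩)

lemma token_mem_rewritten (hB : H.SymbolsBelow B) (hc : H.pairs[i].ctrl ∈ nts x) :
    B + i ∈ nts (H.rewritten B i x) :=
  mem_nts_replace.2 (.inl ⟨token_mem_opened hc, by have := (hB.pairs_getElem i).site_lt; omega⟩)

lemma lt_or_eq_of_mem_opened (hxB : ∀ a ∈ nts x, a < B) {a : ℕ} (ha : a ∈ nts (H.opened B i x)) :
    a < B ∧ a ≠ H.pairs[i].ctrl ∨ a = B + i := by
  obtain ⟨ha, hne⟩ | ⟨-, ha⟩ := mem_nts_replace.1 ha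
  · exact .inl ⟨hxB a ha, hne⟩
  · exact .inr (by simpa using ha)

lemma lt_or_eq_of_mem_rewritten (hH : H.Separated) (hB : H.SymbolsBelow B)
    (hxB : ∀ a ∈ nts x, a < B) {a : ℕ} (ha : a ∈ nts (H.rewritten B i x)) :
    a < B ∧ a ≠ H.pairs[i].ctrl ∧ a ≠ H.pairs[i].site ∨ a = B + i := by
  have hp := hH.proper_getElem i
  obtain ⟨ha, hne⟩ | ⟨-, ha⟩ := mem_nts_replace.1 ha
  · exact (lt_or_eq_of_mem_opened hxB ha).imp_left fun h => ⟨h.1, h.2, hne⟩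
  · exact .inl ⟨(hB.pairs_getElem i).rhs_lt a ha, ne_of_mem_of_not_mem ha hp.ctrl_notMem_rhs,
      ne_of_mem_of_not_mem ha hp.site_notMem_rhs⟩

lemma replace_token_rewritten (hB : H.SymbolsBelow B) (hxB : ∀ a ∈ nts x, a < B)
    (hp : H.pairs[i].Proper) :
    replace (B + i) (atom H.pairs[i].ctrl') (H.rewritten B i x) = H.pairs[i].apply x := by
  obtain ⟨-, -, hs, hrhs⟩ := hB.pairs_getElem i
  rw [rewritten, opened, replace_replace_comm, replace_replace_atom, PairRule.apply]
  · exact fun h => absurd (hxB _ h) (by omega)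
  · omega
  · exact fun h => absurd (hrhs _ h) (by omega)
  · simpa using hp.ctrl'_ne_site.symm

/-- `y` results from `x` by the component `rewriteComp A w F` in a terminating mode. -/
def Rewrites (A : ℕ) (w : SForm T) (F : List ℕ) (x y : SForm T) : Prop :=
  y = replace A w x ∧ ∀ a ∈ F, a ∉ nts y

lemma not_rewrites_of_mem {A a : ℕ} {w : SForm T} {F : List ℕ} (ha : a ∈ nts x) (haA : a ≠ A)
    (haF : a ∈ F) : ¬ Rewrites A w F x y := by
  rintro ⟨rfl, hF⟩
  exact hF a haF (mem_nts_replace.2 (.inl ⟨ha, haA⟩))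

lemma Rewrites.eq_of_notMem {A : ℕ} {w : SForm T} {F : List ℕ} (h : Rewrites A w F x y)
    (hA : A ∉ nts x) : y = x :=
  h.1.trans (replace_of_notMem hA)

lemma add_mem_tokens : B + i ∈ H.tokens B := by
  simp [tokens]

lemma phase_of_rewrites_single (hB : H.SymbolsBelow B) {r : Rule T} (hr : r ∈ H.singles)
    (hx : H.Phase B x) (h : Rewrites r.1 r.2 (H.tokens B) x y) : H.Phase B y := by
  have hne (i : Fin H.pairs.length) : B + i ≠ r.1 := by have := (hB.single_lt r hr).1; omega
  cases hx with
  | idle hx =>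
    by_cases hrx : r.1 ∈ nts x
    · exact h.1 ▸ .idle (hx.tail (.single hr hrx))
    · exact h.eq_of_notMem hrx ▸ .idle hx
  | opened i hx hc =>
    exact (not_rewrites_of_mem (token_mem_opened hc) (hne i) add_mem_tokens h).elim
  | rewritten i hx hc =>
    exact (not_rewrites_of_mem (token_mem_rewritten hB hc) (hne i) add_mem_tokens h).elim

lemma phase_of_rewrites_open (hH : H.Separated) (hB : H.SymbolsBelow B) (hx : H.Phase B x)
    (h : Rewrites H.pairs[j].ctrl (atom (B + j)) (H.otherTokens B j) x y) : H.Phase B y := by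
  have hlt := (hB.pairs_getElem j).ctrl_lt
  have hblock {i : Fin H.pairs.length} (hi : B + i ∈ nts x) : i = j := by
    by_contra hij
    exact not_rewrites_of_mem hi (by omega) (mem_otherTokens.2 ⟨i, hij, rfl⟩) h
  cases hx with
  | idle hx =>
    by_cases hc : H.pairs[j].ctrl ∈ nts x
    · exact h.1 ▸ .opened j hx hc
    · exact h.eq_of_notMem hc ▸ .idle hx
  | opened i hx hc =>
    obtain rfl := hblock (token_mem_opened hc)
    refine h.eq_of_notMem (fun hmem => ?_) ▸ .opened i hx hc
    have := lt_or_eq_of_mem_opened (hB.nts_lt hx) hmem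
    omega
  | rewritten i hx hc =>
    obtain rfl := hblock (token_mem_rewritten hB hc)
    refine h.eq_of_notMem (fun hmem => ?_) ▸ .rewritten i hx hc
    have := lt_or_eq_of_mem_rewritten hH hB (hB.nts_lt hx) hmem
    omega

lemma phase_of_rewrites_site (hH : H.Separated) (hB : H.SymbolsBelow B) (hx : H.Phase B x)
    (h : Rewrites H.pairs[j].site H.pairs[j].rhs
      (H.otherTokens B j ++ (H.guards H.pairs[j]).toList) x y) : H.Phase B y := by
  have hlt := (hB.pairs_getElem j).site_lt
  have hblock {i : Fin H.pairs.length} (hi : B + i ∈ nts x) : i = j := by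
    by_contra hij
    exact not_rewrites_of_mem hi (by omega)
      (List.mem_append_left _ (mem_otherTokens.2 ⟨i, hij, rfl⟩)) h
  cases hx with
  | idle hx =>
    by_cases hs : H.pairs[j].site ∈ nts x
    · have hp : H.pairs[j] ∈ H.pairs := List.getElem_mem j.2
      obtain ⟨a, haM, hax, ha⟩ := hH.exists_guard hx hp hs
      refine (not_rewrites_of_mem hax (ne_of_mem_of_not_mem haM (hH.site_notMem hp)) ?_ h).elim
      exact List.mem_append_right _ (Finset.mem_toList.2 (Finset.mem_filter.2 ⟨haM, ha⟩))
    · exact h.eq_of_notMem hs ▸ .idle hx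
  | opened i hx hc =>
    obtain rfl := hblock (token_mem_opened hc)
    exact h.1 ▸ .rewritten i hx hc
  | rewritten i hx hc =>
    obtain rfl := hblock (token_mem_rewritten hB hc)
    refine h.eq_of_notMem (fun hmem => ?_) ▸ .rewritten i hx hc
    have := lt_or_eq_of_mem_rewritten hH hB (hB.nts_lt hx) hmem
    omega

lemma phase_of_rewrites_close (hH : H.Separated) (hB : H.SymbolsBelow B) (hx : H.Phase B x)
    (h : Rewrites (B + j) (atom H.pairs[j].ctrl') [H.pairs[j].site] x y) : H.Phase B y := by
  have hp : H.pairs[j] ∈ H.pairs := List.getElem_mem j.2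
  cases hx with
  | idle hx => exact h.eq_of_notMem (fun hmem => by have := hB.nts_lt hx _ hmem; omega) ▸ .idle hx
  | opened i hx hc =>
    obtain rfl | hij := eq_or_ne i j
    · have hs : H.pairs[i].site ∈ nts (H.opened B i _) :=
        mem_nts_replace.2 (.inl ⟨hH.site_mem hx hp hc, (hH.proper hp).ctrl_ne_site.symm⟩)
      have := (hB.pairs_getElem i).site_lt
      exact (not_rewrites_of_mem hs (by omega) (by simp) h).elim
    · refine h.eq_of_notMem (fun hmem => ?_) ▸ .opened i hx hc
      have := lt_or_eq_of_mem_opened (hB.nts_lt hx) hmem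
      omega
  | rewritten i hx hc =>
    obtain rfl | hij := eq_or_ne i j
    · rw [h.1, replace_token_rewritten hB (hB.nts_lt hx) (hH.proper hp)]
      exact .idle (hx.tail (.pair hp hc (hH.site_mem hx hp hc)))
    · refine h.eq_of_notMem (fun hmem => ?_) ▸ .rewritten i hx hc
      have := lt_or_eq_of_mem_rewritten hH hB (hB.nts_lt hx) hmem
      omega

lemma lang_terminatingComps_subset {f : Mode} (hH : H.Separated) (hB : H.SymbolsBelow B)
    (hf : ∀ (P : List (Rule T)) n y, modeOK P f n y → ∀ r ∈ P, r.1 ∉ nts y) :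
    (CDGS.ofList H.start (H.terminatingComps B)).lang f ⊆ H.lang := by
  refine lang_subset_of_invariant (H.Phase B) (.idle .refl) (fun x y hx hxy => ?_) fun w hw => ?_
  · obtain ⟨P, hP, n, hsteps, hmode⟩ := CDGS.modeStep_ofList_iff.1 hxy
    have hy := hf P n y hmode
    obtain ⟨r, hr, rfl⟩ | ⟨i, rfl | rfl | rfl⟩ := mem_terminatingComps.1 hP
    · exact phase_of_rewrites_single hB hr hx
        (eq_replace_of_stepsN_rewriteComp (hH.single_notMem hr) hsteps hy)
    · refine phase_of_rewrites_open hH hB hx (eq_replace_of_stepsN_rewriteComp ?_ hsteps hy)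
      have := (hB.pairs_getElem i).ctrl_lt
      simp only [nts_atom, Multiset.mem_singleton]
      omega
    · exact phase_of_rewrites_site hH hB hx
        (eq_replace_of_stepsN_rewriteComp (hH.proper_getElem i).site_notMem_rhs hsteps hy)
    · refine phase_of_rewrites_close hH hB hx (eq_replace_of_stepsN_rewriteComp ?_ hsteps hy)
      have := (hB.pairs_getElem i).ctrl'_lt
      simp only [nts_atom, Multiset.mem_singleton]
      omega
  · generalize hz : (w.map Sum.inr : SForm T) = z at hw
    have hnts : nts z = 0 := hz ▸ nts_map_inr w
    cases hw with
    | idle hx => rwa [← hz] at hx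
    | opened i hx hc => simpa [hnts] using token_mem_opened (B := B) hc
    | rewritten i hx hc => simpa [hnts] using token_mem_rewritten hB hc

section Completeness

variable {f : Mode} {m n : ℕ}

lemma stepsNB_openComp (hH : H.Separated) (hB : H.SymbolsBelow B) (hn : 1 ≤ n)
    (hx : H.Reachable x) (hc : H.pairs[i].ctrl ∈ nts x) (hxm : ntCount x ≤ m) :
    StepsNB (H.openComp B i) m n x (H.opened B i x) ∧
      ∀ r ∈ H.openComp B i, r.1 ∉ nts (H.opened B i x) := by
  refine ⟨stepsNB_rewriteComp hn (Multiset.count_eq_one_of_mem (hH.nodup hx) hc) hxm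
    (ntCount_replace_atom.trans_le hxm), ?_⟩
  have hlt := (hB.pairs_getElem i).ctrl_lt
  refine forall_rewriteComp_notMem_iff.2 ⟨fun hmem => ?_, fun a ha hmem => ?_⟩
  · have := lt_or_eq_of_mem_opened (hB.nts_lt hx) hmem
    omega
  · obtain ⟨j, hji, rfl⟩ := mem_otherTokens.1 ha
    have := lt_or_eq_of_mem_opened (hB.nts_lt hx) hmem
    omega

lemma ntCount_rewritten (hB : H.SymbolsBelow B) (hxB : ∀ a ∈ nts x, a < B)
    (hp : H.pairs[i].Proper) : ntCount (H.rewritten B i x) = ntCount (H.pairs[i].apply x) := by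
  rw [← replace_token_rewritten hB hxB hp, ntCount_replace_atom]

lemma stepsNB_siteComp (hH : H.Separated) (hB : H.SymbolsBelow B) (hn : 1 ≤ n)
    (hx : H.Reachable x) (hc : H.pairs[i].ctrl ∈ nts x) (hxm : ntCount x ≤ m)
    (hym : ntCount (H.pairs[i].apply x) ≤ m) :
    StepsNB (H.siteComp B i) m n (H.opened B i x) (H.rewritten B i x) ∧
      ∀ r ∈ H.siteComp B i, r.1 ∉ nts (H.rewritten B i x) := by
  have hp : H.pairs[i] ∈ H.pairs := List.getElem_mem i.2
  have hlt := (hB.pairs_getElem i).site_lt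
  have hcount : (nts (H.opened B i x)).count H.pairs[i].site = 1 := by
    rw [opened, count_nts_replace_of_ne (hH.proper hp).ctrl_ne_site.symm]
    · exact Multiset.count_eq_one_of_mem (hH.nodup hx) (hH.site_mem hx hp hc)
    · simp only [nts_atom, Multiset.mem_singleton]
      omega
  refine ⟨stepsNB_rewriteComp hn hcount (ntCount_replace_atom.trans_le hxm)
    ((ntCount_rewritten hB (hB.nts_lt hx) (hH.proper hp)).trans_le hym), ?_⟩
  refine forall_rewriteComp_notMem_iff.2 ⟨fun hmem => ?_, fun a ha hmem => ?_⟩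
  · have := lt_or_eq_of_mem_rewritten hH hB (hB.nts_lt hx) hmem
    omega
  obtain ha | ha := List.mem_append.1 ha
  · obtain ⟨j, hji, rfl⟩ := mem_otherTokens.1 ha
    have := lt_or_eq_of_mem_rewritten hH hB (hB.nts_lt hx) hmem
    omega
  · obtain ⟨haM, harhs⟩ := Finset.mem_filter.1 (Finset.mem_toList.1 ha)
    have haB := hB.masters_lt a haM
    simp only [rewritten, opened, mem_nts_replace, nts_atom, Multiset.mem_singleton] at hmem
    obtain ⟨⟨hax, hne⟩ | ⟨-, rfl⟩, -⟩ | ⟨-, hmem⟩ := hmem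
    exacts [hne (hH.master_unique hx haM (hH.ctrl_mem hp) hax hc), by omega, harhs hmem]

lemma stepsNB_closeComp (hH : H.Separated) (hB : H.SymbolsBelow B) (hn : 1 ≤ n)
    (hx : H.Reachable x) (hc : H.pairs[i].ctrl ∈ nts x)
    (hym : ntCount (H.pairs[i].apply x) ≤ m) :
    StepsNB (H.closeComp B i) m n (H.rewritten B i x) (H.pairs[i].apply x) ∧
      ∀ r ∈ H.closeComp B i, r.1 ∉ nts (H.pairs[i].apply x) := by
  have hp := hH.proper_getElem i
  have hxB := hB.nts_lt hx
  obtain ⟨-, hc', hs, hrhs⟩ := hB.pairs_getElem i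
  have htx : B + i ∉ nts x := fun h => absurd (hxB _ h) (by omega)
  have hcount : (nts (H.rewritten B i x)).count (B + i) = 1 := by
    rw [rewritten, count_nts_replace_of_ne (by omega) fun h => absurd (hrhs _ h) (by omega),
      opened, count_nts_replace_atom_self htx]
    exact Multiset.count_eq_one_of_mem (hH.nodup hx) hc
  have happly := replace_token_rewritten hB hxB hp
  refine ⟨?_, forall_rewriteComp_notMem_iff.2 ?_⟩
  · rw [← happly]
    exact stepsNB_rewriteComp hn hcount ((ntCount_rewritten hB hxB hp).trans_le hym)
      (by rwa [happly])
  · rw [← happly]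
    have hB' : B + i ≠ H.pairs[i].ctrl' := by omega
    have := hp.ctrl'_ne_site
    have hsite := lt_or_eq_of_mem_rewritten hH hB hxB (i := i) (a := H.pairs[i].site)
    simp only [mem_nts_replace, nts_atom, Multiset.mem_singleton, List.mem_singleton, forall_eq]
    grind

lemma langB_subset_langB_terminatingComps (hH : H.Separated) (hB : H.SymbolsBelow B) (hn : 1 ≤ n)
    (hm : 1 ≤ m)
    (hf : ∀ (P : List (Rule T)) y, (∀ r ∈ P, r.1 ∉ nts y) → modeOK P f n y) :
    H.langB m ⊆ (CDGS.ofList H.start (H.terminatingComps B)).langB f m := by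
  refine langB_subset_langB hm fun x y hx hxy hxm hym => ?_
  have hstep {P : List (Rule T)} (hP : P ∈ H.terminatingComps B) {u v : SForm T}
      (h : StepsNB P m n u v ∧ ∀ r ∈ P, r.1 ∉ nts v) :
      (CDGS.ofList H.start (H.terminatingComps B)).ModeStepB f m u v :=
    CDGS.modeStepB_ofList_iff.2 ⟨P, hP, n, h.1, hf P v h.2⟩
  cases hxy with
  | @single r _ hr hrx =>
    refine .single (hstep (mem_terminatingComps.2 (.inl ⟨r, hr, rfl⟩))
      ⟨stepsNB_rewriteComp hn (Multiset.count_eq_one_of_mem (hH.nodup hx) hrx) hxm hym, ?_⟩)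
    refine forall_rewriteComp_notMem_iff.2 ⟨?_, fun a ha hmem => ?_⟩
    · simp [mem_nts_replace, hH.single_notMem hr]
    · have := hB.nts_lt (hx.tail (.single hr hrx)) a hmem
      have := (List.mem_range'_1.1 ha).1
      omega
  | pair hp hc hs =>
    obtain ⟨i, rfl⟩ := List.get_of_mem hp
    have hcomp {P : List (Rule T)} (h : P = H.openComp B i ∨ P = H.siteComp B i ∨
        P = H.closeComp B i) : P ∈ H.terminatingComps B := mem_terminatingComps.2 (.inr ⟨i, h⟩)
    exact .head (hstep (hcomp (.inl rfl)) (stepsNB_openComp hH hB hn hx hc hxm))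
      (.head (hstep (hcomp (.inr (.inl rfl))) (stepsNB_siteComp hH hB hn hx hc hxm hym))
      (.single (hstep (hcomp (.inr (.inr rfl))) (stepsNB_closeComp hH hB hn hx hc hym))))

end Completeness

lemma lamFree_terminatingComps (hlam : H.LamFree) :
    (CDGS.ofList H.start (H.terminatingComps B)).LamFree := by
  refine CDGS.lamFree_ofList fun P hP => ?_
  obtain ⟨r, hr, rfl⟩ | ⟨i, rfl | rfl | rfl⟩ := mem_terminatingComps.1 hP
  · exact rewriteComp_lamFree (hlam.1 r hr)
  · exact rewriteComp_lamFree (List.cons_ne_nil _ _)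
  · exact rewriteComp_lamFree (hlam.2 _ (List.getElem_mem i.2))
  · exact rewriteComp_lamFree (List.cons_ne_nil _ _)

theorem exists_cdgs_of_terminating {f : Mode} {n : ℕ} (hH : H.Separated) (hn : 1 ≤ n)
    (hf : ∀ (P : List (Rule T)) m y, modeOK P f m y → ∀ r ∈ P, r.1 ∉ nts y)
    (hfn : ∀ (P : List (Rule T)) y, (∀ r ∈ P, r.1 ∉ nts y) → modeOK P f n y) :
    ∃ G : CDGS T, (H.LamFree → G.LamFree) ∧ G.lang f ⊆ H.lang ∧
      ∀ m, 1 ≤ m → H.langB m ⊆ G.langB f m :=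
  let ⟨B, hB⟩ := H.exists_symbolsBelow
  ⟨CDGS.ofList H.start (H.terminatingComps B), lamFree_terminatingComps,
    lang_terminatingComps_subset hH hB hf,
    fun _ hm => langB_subset_langB_terminatingComps hH hB hn hm hfn⟩

end MatrixGrammar

/-! ### From programmed grammars to separated matrix grammars -/

namespace PairRule

variable {p : PairRule T} {g : ℕ → ℕ} {x : SForm T}

lemma relabel_apply (hp : p.Proper) (hg : g p.ctrl' = g p.ctrl) :
    relabel g (p.apply x) = relabel g (replace p.site p.rhs x) := by
  rw [apply, replace_replace_comm hp.ctrl_ne_site.symm _ hp.ctrl_notMem_rhs,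
    relabel_replace_atom hg]
  simpa using hp.ctrl'_ne_site.symm

lemma nts_apply (hp : p.Proper) (hx : (nts x).Nodup) (hc : p.ctrl ∈ nts x) (hs : p.site ∈ nts x) :
    nts (p.apply x) = ((nts x).erase p.ctrl).erase p.site + {p.ctrl'} + nts p.rhs := by
  have hctrl := nts_replace (w := atom p.ctrl') (Multiset.count_eq_one_of_mem hx hc)
  have hsite : p.site ∈ (nts x).erase p.ctrl :=
    (Multiset.mem_erase_of_ne hp.ctrl_ne_site.symm).2 hs
  rw [apply, nts_replace, hctrl, nts_atom, Multiset.erase_add_left_pos _ hsite]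
  rw [count_nts_replace_of_ne hp.ctrl_ne_site.symm (by simpa using hp.ctrl'_ne_site.symm)]
  exact Multiset.count_eq_one_of_mem hx hs

end PairRule

namespace PG

variable (G : PG T) (m B : ℕ)

/-- A nonterminal below `B` tagged with one of `m + 1` numbers, which suffices to keep the
nonterminals of forms of index `m` pairwise distinct. -/
abbrev Slot := Fin (m + 1) × Fin B

/-- The information carried by a master: the label to be applied next, all slots occurring in the
form, and the one among them that the master stands for. -/
abbrev MasterState := Fin G.nLab × Finset (Slot m B) × Slot m B

/-- The nonterminals of the simulating matrix grammar: the start symbol, the slaves, which stand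
for one slot each, and the masters. -/
abbrev TaggedSymbol := Option (Slot m B ⊕ G.MasterState m B)

variable {G m B}

/-- The nonterminal encoding a tagged symbol. -/
def TaggedSymbol.code (c : G.TaggedSymbol m B) : ℕ := Encodable.encode c

variable (G m B) in
/-- The start symbol of the simulating matrix grammar. -/
def initSymbol : ℕ := TaggedSymbol.code (none : G.TaggedSymbol m B)

variable (G) in
/-- The slave standing for a slot. -/
def slave (s : Slot m B) : ℕ := TaggedSymbol.code (some (.inl s) : G.TaggedSymbol m B)

/-- The master in a given state. -/
def master (q : G.MasterState m B) : ℕ := TaggedSymbol.code (some (.inr q))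

/-- The nonterminal of `G` that a tagged symbol stands for. -/
def TaggedSymbol.base : G.TaggedSymbol m B → ℕ
  | none => G.start
  | some (.inl s) => s.2
  | some (.inr q) => q.2.2.2

variable (G m B) in
/-- The map from codes of tagged symbols to the nonterminals of `G`; numbers that are not codes are
fixed, so that the fibres are finite. -/
noncomputable def untag : ℕ → ℕ := Function.extend (TaggedSymbol.code (G := G) (m := m) (B := B))
  TaggedSymbol.base id

variable (G) in
/-- The slaves of a set of slots. -/
def slaves (N : Finset (Slot m B)) : Multiset ℕ := N.val.map G.slave

/-- The nonterminals of a form whose master is in state `q = (p, U, a)`: the slots `U`, where `a` is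
represented by the master and the others by slaves. -/
def conf (q : G.MasterState m B) : Multiset ℕ := master q ::ₘ G.slaves (q.2.1.erase q.2.2)

lemma code_injective : Function.Injective (TaggedSymbol.code (G := G) (m := m) (B := B)) :=
  Encodable.encode_injective

@[simp] lemma code_inj {c d : G.TaggedSymbol m B} : c.code = d.code ↔ c = d :=
  code_injective.eq_iff

lemma untag_code (c : G.TaggedSymbol m B) : untag G m B c.code = c.base :=
  code_injective.extend_apply _ _ c

@[simp] lemma untag_slave (s : Slot m B) : untag G m B (slave G s) = s.2 :=
  untag_code (some (.inl s))

@[simp] lemma untag_master (q : G.MasterState m B) : untag G m B (master q) = q.2.2.2 :=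
  untag_code (some (.inr q))

@[simp] lemma slave_inj {s s' : Slot m B} : slave G s = slave G s' ↔ s = s' := by simp [slave]

@[simp] lemma master_inj {q q' : G.MasterState m B} : master q = master q' ↔ q = q' := by
  simp [master]

@[simp] lemma slave_ne_master {s : Slot m B} {q : G.MasterState m B} : slave G s ≠ master q := by
  simp [slave, master]

@[simp] lemma master_ne_slave {s : Slot m B} {q : G.MasterState m B} : master q ≠ slave G s :=
  slave_ne_master.symm

@[simp] lemma initSymbol_ne_slave {s : Slot m B} : initSymbol G m B ≠ slave G s := by
  simp [slave, initSymbol]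

@[simp] lemma initSymbol_ne_master {q : G.MasterState m B} : initSymbol G m B ≠ master q := by
  simp [master, initSymbol]

lemma mem_slaves {n : ℕ} {N : Finset (Slot m B)} : n ∈ G.slaves N ↔ ∃ s ∈ N, slave G s = n := by
  simp [slaves]

@[simp] lemma slave_mem_slaves {s : Slot m B} {N : Finset (Slot m B)} :
    slave G s ∈ G.slaves N ↔ s ∈ N := by
  simp [slaves]

@[simp] lemma master_notMem_slaves {q : G.MasterState m B} {N : Finset (Slot m B)} :
    master q ∉ G.slaves N := by
  simp [slaves]

lemma slaves_insert {s : Slot m B} {N : Finset (Slot m B)} (hs : s ∉ N) :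
    G.slaves (insert s N) = slave G s ::ₘ G.slaves N := by
  simp [slaves, Finset.insert_val_of_notMem hs]

lemma slaves_union {M N : Finset (Slot m B)} (h : Disjoint M N) :
    G.slaves (M ∪ N) = G.slaves M + G.slaves N := by
  rw [← Finset.disjUnion_eq_union M N h]
  exact Multiset.map_add _ _ _

lemma slaves_erase (s : Slot m B) (N : Finset (Slot m B)) :
    (G.slaves N).erase (slave G s) = G.slaves (N.erase s) := by
  rw [slaves, slaves, Finset.erase_val, Multiset.map_erase]
  exact fun _ _ => slave_inj.1

lemma nodup_conf (q : G.MasterState m B) : (conf q).Nodup :=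
  Multiset.nodup_cons.2 ⟨master_notMem_slaves,
    (q.2.1.erase q.2.2).nodup.map fun _ _ => slave_inj.1⟩

lemma mem_conf {n : ℕ} {p : Fin G.nLab} {U : Finset (Slot m B)} {a : Slot m B} :
    n ∈ conf (p, U, a) ↔ n = master (p, U, a) ∨ ∃ s ∈ U, s ≠ a ∧ slave G s = n := by
  simp [conf, mem_slaves, and_assoc, and_left_comm]

lemma card_conf {p : Fin G.nLab} {U : Finset (Slot m B)} {a : Slot m B} (ha : a ∈ U) :
    (conf (p, U, a)).card = U.card := by
  rw [conf, slaves, Multiset.card_cons, Multiset.card_map]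
  exact Finset.card_erase_add_one ha

lemma finite_preimage_untag (n : ℕ) : (untag G m B ⁻¹' {n}).Finite := by
  refine ((Set.finite_range (TaggedSymbol.code (G := G) (m := m) (B := B))).insert n).subset
    fun c hc => ?_
  by_cases h : ∃ d : G.TaggedSymbol m B, d.code = c
  · exact .inr h
  · exact .inl ((Function.extend_apply' _ _ c h).symm.trans hc)

lemma finite_preimage_relabel {g : ℕ → ℕ} (hg : ∀ n, (g ⁻¹' {n}).Finite) (v : SForm T) :
    (relabel g ⁻¹' {v}).Finite := by
  have hsymb (s : Symb T) : (Sum.map g id ⁻¹' {s}).Finite := by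
    cases s with
    | inl n =>
      refine ((hg n).image Sum.inl).subset ?_
      rintro (a | c) h
      · exact ⟨a, Sum.inl.inj h, rfl⟩
      · exact Sum.inr_ne_inl h |>.elim
    | inr c =>
      refine (Set.finite_singleton (Sum.inr c)).subset ?_
      rintro (a | c') h
      · exact Sum.inl_ne_inr h |>.elim
      · exact congrArg Sum.inr (Sum.inr.inj h)
  induction v with
  | nil => exact (Set.finite_singleton []).subset fun w hw => List.map_eq_nil_iff.1 hw
  | cons s v ih =>
    refine ((hsymb s).image2 List.cons ih).subset fun w hw => ?_
    obtain ⟨t, w, rfl, ht, hw⟩ := List.map_eq_cons_iff.1 hw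
    exact ⟨t, ht, w, hw, rfl⟩

/-- The matrix that moves the master from the slot `a` to the slot `b`. -/
def passRule (p : Fin G.nLab) (U : Finset (Slot m B)) (a b : Slot m B) : PairRule T where
  ctrl := master (p, U, a)
  ctrl' := slave G a
  site := slave G b
  rhs := atom (master (p, U, b))

/-- The matrix that applies the rule labelled `p`, whose right-hand side is tagged as `w` with
slots `N`, to the slave of `b`, and lets the master proceed to the label `p'`. -/
def applyRule (p p' : Fin G.nLab) (U N : Finset (Slot m B)) (a b : Slot m B) (w : SForm T) :
    PairRule T where
  ctrl := master (p, U, a)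
  ctrl' := master (p', U.erase b ∪ N, a)
  site := slave G b
  rhs := w

variable (m B) in
/-- The forms that contain no nonterminals, or exactly the master and the slaves that a master
state with label `p` announces. -/
def Coherent (p : Fin G.nLab) (z : SForm T) : Prop :=
  nts z = 0 ∨ ∃ (U : Finset (Slot m B)) (a : Slot m B), a ∈ U ∧ nts z = conf (p, U, a)

variable (G m B) in
/-- The matrices of length one: those that introduce the first master, and those that apply a rule
to a master that is the only nonterminal. -/
inductive TaggedSingle : Rule T → Prop
  | initial {p : Fin G.nLab} {a : Slot m B} (ha : (a.2 : ℕ) = G.start) :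
    TaggedSingle (initSymbol G m B, atom (master (p, {a}, a)))
  | last {p p' : Fin G.nLab} {a : Slot m B} {w : SForm T} (hp' : p' ∈ G.succ p)
    (hrule : G.rule p = ((a.2 : ℕ), relabel (untag G m B) w))
    (hw : Coherent m B p' w) (ha : master (p, {a}, a) ∉ nts w) :
    TaggedSingle (master (p, {a}, a), w)

variable (G m B) in
/-- The matrices of length two. -/
inductive TaggedPair : PairRule T → Prop
  | pass {p : Fin G.nLab} {U : Finset (Slot m B)} {a b : Slot m B} (ha : a ∈ U) (hb : b ∈ U)
    (hab : a ≠ b) : TaggedPair (passRule p U a b)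
  | apply {p p' : Fin G.nLab} {U N : Finset (Slot m B)} {a b : Slot m B} {w : SForm T}
    (ha : a ∈ U) (hb : b ∈ U) (hab : a ≠ b) (hp' : p' ∈ G.succ p)
    (hrule : G.rule p = ((b.2 : ℕ), relabel (untag G m B) w)) (hw : nts w = G.slaves N)
    (hN : Disjoint N U) : TaggedPair (applyRule p p' U N a b w)

variable (G m B) in
/-- The right-hand sides of the simulating matrix grammar are tagged variants of single
nonterminals and of right-hand sides of `G`. -/
def taggedRhs : Set (SForm T) := relabel (untag G m B) ⁻¹'
  (Set.range (fun b : Fin B => atom b) ∪ Set.range fun p => (G.rule p).2)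

lemma finite_taggedRhs : (taggedRhs G m B).Finite :=
  ((Set.finite_range _).union (Set.finite_range _)).preimage'
    fun v _ => finite_preimage_relabel finite_preimage_untag v

lemma atom_master_mem_taggedRhs {q : G.MasterState m B} :
    atom (master q) ∈ taggedRhs G m B :=
  .inl ⟨q.2.2.2, by simp [relabel, atom]⟩

lemma mem_taggedRhs_of_rule_eq {p : Fin G.nLab} {n : ℕ} {w : SForm T}
    (h : G.rule p = (n, relabel (untag G m B) w)) : w ∈ taggedRhs G m B :=
  .inr ⟨p, congrArg Prod.snd h⟩

lemma slave_mem_range_code (s : Slot m B) :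
    slave G s ∈ Set.range (TaggedSymbol.code (G := G) (m := m) (B := B)) :=
  ⟨some (.inl s), rfl⟩

lemma master_mem_range_code (q : G.MasterState m B) :
    master q ∈ Set.range (TaggedSymbol.code (G := G) (m := m) (B := B)) :=
  ⟨some (.inr q), rfl⟩

lemma finite_taggedSingle : {r | TaggedSingle G m B r}.Finite := by
  refine ((Set.finite_range (TaggedSymbol.code (G := G) (m := m) (B := B))).prod
    (finite_taggedRhs (G := G) (m := m) (B := B))).subset ?_
  rintro _ (_ | ⟨_, hr, _, _⟩)
  · exact Set.mk_mem_prod ⟨none, rfl⟩ atom_master_mem_taggedRhs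
  · exact Set.mk_mem_prod (master_mem_range_code _) (mem_taggedRhs_of_rule_eq hr)

lemma finite_taggedPair : {p | TaggedPair G m B p}.Finite := by
  have hcode := Set.finite_range (TaggedSymbol.code (G := G) (m := m) (B := B))
  have hrhs := finite_taggedRhs (G := G) (m := m) (B := B)
  refine ((hcode.prod (hcode.prod (hcode.prod hrhs))).image
    fun q => PairRule.mk q.1 q.2.1 q.2.2.1 q.2.2.2).subset fun p hp => ?_
  suffices h : p.ctrl ∈ Set.range TaggedSymbol.code ∧ p.ctrl' ∈ Set.range TaggedSymbol.code ∧
      p.site ∈ Set.range TaggedSymbol.code ∧ p.rhs ∈ taggedRhs G m B from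
    ⟨(p.ctrl, p.ctrl', p.site, p.rhs), h, rfl⟩
  obtain _ | ⟨_, _, _, _, hrule, _, _⟩ := hp
  · exact ⟨master_mem_range_code _, slave_mem_range_code _, slave_mem_range_code _,
      atom_master_mem_taggedRhs⟩
  · exact ⟨master_mem_range_code _, master_mem_range_code _, slave_mem_range_code _,
      mem_taggedRhs_of_rule_eq hrule⟩

variable (G m B) in
/-- The matrix grammar that simulates the derivations of index `m` of a programmed grammar with
nonterminals below `B`. -/
noncomputable def toMatrixGrammar : MatrixGrammar T where
  start := initSymbol G m B
  masters := Finset.univ.image (master (G := G) (m := m) (B := B))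
  singles := (finite_taggedSingle (G := G) (m := m) (B := B)).toFinset.toList
  pairs := (finite_taggedPair (G := G) (m := m) (B := B)).toFinset.toList

lemma mem_masters {n : ℕ} :
    n ∈ (toMatrixGrammar G m B).masters ↔ ∃ q : G.MasterState m B, master q = n := by
  simp [toMatrixGrammar]

lemma mem_singles {r : Rule T} :
    r ∈ (toMatrixGrammar G m B).singles ↔ TaggedSingle G m B r := by
  simp [toMatrixGrammar]

lemma mem_pairs {p : PairRule T} :
    p ∈ (toMatrixGrammar G m B).pairs ↔ TaggedPair G m B p := by
  simp [toMatrixGrammar]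

lemma lamFree_toMatrixGrammar (hG : G.LamFree) : (toMatrixGrammar G m B).LamFree := by
  have hrhs {p : Fin G.nLab} {n : ℕ} {w : SForm T}
      (hr : G.rule p = (n, relabel (untag G m B) w)) : w ≠ [] := by
    rintro rfl
    exact hG p (congrArg Prod.snd hr)
  refine ⟨fun r hr => ?_, fun p hp => ?_⟩
  · obtain _ | ⟨_, hrule, _, _⟩ := mem_singles.1 hr
    exacts [List.cons_ne_nil _ _, hrhs hrule]
  · obtain _ | ⟨_, _, _, _, hrule, _, _⟩ := mem_pairs.1 hp
    exacts [List.cons_ne_nil _ _, hrhs hrule]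

section Pairs

variable {p p' : Fin G.nLab} {U N : Finset (Slot m B)} {a b : Slot m B} {w x : SForm T}

lemma proper_passRule (hab : a ≠ b) : (passRule p U a b).Proper := by
  constructor <;> simp [passRule, hab]

lemma proper_applyRule (hb : b ∈ U) (hw : nts w = G.slaves N)
    (hN : Disjoint N U) : (applyRule p p' U N a b w).Proper := by
  have hbN : b ∉ N := fun h => Finset.disjoint_left.1 hN h hb
  have hstate : U.erase b ∪ N ≠ U := fun h => by simpa [hbN] using h.symm.subset hb
  constructor <;> simp [applyRule, hw, hbN, hstate]

lemma conf_erase_erase (hx : nts x = conf (p, U, a)) :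
    ((nts x).erase (master (p, U, a))).erase (slave G b) = G.slaves ((U.erase a).erase b) := by
  rw [hx, conf, Multiset.erase_cons_head, slaves_erase]

lemma nts_apply_passRule (ha : a ∈ U) (hb : b ∈ U) (hab : a ≠ b) (hx : nts x = conf (p, U, a)) :
    nts ((passRule p U a b).apply x) = conf (p, U, b) := by
  rw [PairRule.nts_apply (proper_passRule hab) (hx ▸ nodup_conf _)
    (hx ▸ mem_conf.2 (.inl rfl)) (hx ▸ mem_conf.2 (.inr ⟨b, hb, hab.symm, rfl⟩))]
  have hslots : U.erase b = insert a ((U.erase a).erase b) := by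
    rw [Finset.erase_right_comm, Finset.insert_erase (Finset.mem_erase.2 ⟨hab, ha⟩)]
  simp only [passRule]
  rw [conf_erase_erase hx, nts_atom, conf, hslots, slaves_insert (by simp)]
  simp only [add_comm _ ({_} : Multiset ℕ), Multiset.singleton_add]

lemma nts_apply_applyRule (ha : a ∈ U) (hb : b ∈ U) (hab : a ≠ b) (hw : nts w = G.slaves N)
    (hN : Disjoint N U) (hx : nts x = conf (p, U, a)) :
    nts ((applyRule p p' U N a b w).apply x) = conf (p', U.erase b ∪ N, a) := by
  rw [PairRule.nts_apply (proper_applyRule hb hw hN) (hx ▸ nodup_conf _)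
    (hx ▸ mem_conf.2 (.inl rfl)) (hx ▸ mem_conf.2 (.inr ⟨b, hb, hab.symm, rfl⟩))]
  have hslots : (U.erase b ∪ N).erase a = (U.erase a).erase b ∪ N := by
    rw [Finset.erase_union_distrib, Finset.erase_right_comm,
      Finset.erase_eq_of_notMem fun h => Finset.disjoint_left.1 hN h ha]
  simp only [applyRule]
  rw [conf_erase_erase hx, hw, conf, hslots, slaves_union, add_right_comm, ← slaves_union,
    add_comm, Multiset.singleton_add]
  all_goals exact hN.symm.mono_left ((Finset.erase_subset _ _).trans (Finset.erase_subset _ _))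

lemma relabel_apply_passRule (hab : a ≠ b) :
    relabel (untag G m B) ((passRule p U a b).apply x) = relabel (untag G m B) x := by
  rw [PairRule.relabel_apply (proper_passRule hab) (by simp [passRule])]
  exact relabel_replace_atom (by simp [passRule])

lemma relabel_apply_applyRule (hb : b ∈ U) (hw : nts w = G.slaves N) (hN : Disjoint N U) :
    relabel (untag G m B) ((applyRule p p' U N a b w).apply x) =
      relabel (untag G m B) (replace (slave G b) w x) :=
  PairRule.relabel_apply (proper_applyRule hb hw hN) (by simp [applyRule])

end Pairs

end PG

namespace PG

variable {G : PG T} {m B : ℕ}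

/-- Derivability of a form `x` with `p` as the label to be applied next. -/
def Derivable (p : Fin G.nLab) (x : SForm T) : Prop :=
  ∃ p₀, Relation.ReflTransGen G.PStep ([Sum.inl G.start], p₀) (x, p)

lemma Derivable.tail (hG : G.NoAC) {p p' : Fin G.nLab} {x y : SForm T} (hx : Derivable p x)
    (hxy : RStep [G.rule p] x y) (hp' : p' ∈ G.succ p) : Derivable p' y :=
  let ⟨p₀, h⟩ := hx
  ⟨p₀, h.tail (hG.pstep_iff.2 ⟨hxy, hp'⟩)⟩

variable (G m B) in
/-- The invariant of the derivations of the simulating matrix grammar. -/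
inductive Tagging : SForm T → Prop
  | start : Tagging [Sum.inl (initSymbol G m B)]
  | coherent {p : Fin G.nLab} {x : SForm T} (hx : Coherent m B p x)
    (hder : Derivable p (relabel (untag G m B) x)) : Tagging x

lemma Coherent.exists_of_mem {p : Fin G.nLab} {x : SForm T}
    (hx : Coherent m B p x) {n : ℕ} (hn : n ∈ nts x) :
    ∃ (U : Finset (Slot m B)) (a : Slot m B), a ∈ U ∧ nts x = conf (p, U, a) ∧
      (n = master (p, U, a) ∨ ∃ s ∈ U, s ≠ a ∧ slave G s = n) := by
  obtain h | ⟨U, a, ha, h⟩ := hx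
  · simp [h] at hn
  · exact ⟨U, a, ha, h, mem_conf.1 (h ▸ hn)⟩

lemma Tagging.exists_of_master_mem {q : G.MasterState m B} {x : SForm T} (hx : Tagging G m B x)
    (hq : master q ∈ nts x) :
    q.2.2 ∈ q.2.1 ∧ nts x = conf q ∧ Derivable q.1 (relabel (untag G m B) x) := by
  cases hx with
  | start => simp [eq_comm] at hq
  | coherent hcoh hder =>
    obtain ⟨U, a, ha, hx, h | ⟨s, -, -, h⟩⟩ := hcoh.exists_of_mem hq
    · obtain rfl := master_inj.1 h
      exact ⟨ha, hx, hder⟩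
    · exact absurd h slave_ne_master

lemma Tagging.exists_of_slave_mem {s : Slot m B} {x : SForm T} (hx : Tagging G m B x)
    (hs : slave G s ∈ nts x) : ∃ q : G.MasterState m B, q.2.2 ≠ s ∧ nts x = conf q := by
  cases hx with
  | start => simp [eq_comm] at hs
  | coherent hcoh hder =>
    obtain ⟨U, a, -, hx, h | ⟨s', -, hne, h⟩⟩ := hcoh.exists_of_mem hs
    · exact absurd h slave_ne_master
    · obtain rfl := slave_inj.1 h
      exact ⟨_, hne.symm, hx⟩

lemma Coherent.nodup {p : Fin G.nLab} {x : SForm T} (hx : Coherent m B p x) :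
    (nts x).Nodup := by
  obtain h | ⟨U, a, -, h⟩ := hx
  · simp [h]
  · exact h ▸ nodup_conf _

lemma Tagging.nodup {x : SForm T} (hx : Tagging G m B x) : (nts x).Nodup := by
  cases hx with
  | start => simp
  | coherent hcoh _ => exact hcoh.nodup

lemma nts_replace_master {p : Fin G.nLab} {a : Slot m B} {x w : SForm T}
    (hx : nts x = conf (p, {a}, a)) : nts (replace (master (p, {a}, a)) w x) = nts w := by
  have hcount : (nts x).count (master (p, {a}, a)) = 1 :=
    Multiset.count_eq_one_of_mem (hx ▸ nodup_conf _) (hx ▸ mem_conf.2 (.inl rfl))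
  simp [nts_replace hcount, hx, conf, slaves]

lemma Tagging.single (hG : G.NoAC) {x : SForm T} {r : Rule T} (hx : Tagging G m B x)
    (hr : TaggedSingle G m B r) (hmem : r.1 ∈ nts x) : Tagging G m B (replace r.1 r.2 x) := by
  have hcount := Multiset.count_eq_one_of_mem hx.nodup hmem
  obtain @⟨p, a, ha⟩ | @⟨p, p', a, w, hp', hrule, hw, ha⟩ := hr
  · cases hx with
    | start =>
      refine .coherent (p := p) (.inr ⟨{a}, a, by simp, by simp [replace, conf, slaves]⟩) ?_
      simpa [replace, relabel, atom, ha] using ⟨p, .refl⟩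
    | coherent hcoh _ =>
      obtain ⟨U, b, -, -, h | ⟨s, -, -, h⟩⟩ := hcoh.exists_of_mem hmem
      · exact absurd h initSymbol_ne_master
      · exact absurd h.symm initSymbol_ne_slave
  · obtain ⟨-, hconf, hder⟩ := hx.exists_of_master_mem hmem
    refine .coherent (p := p') (by rwa [Coherent, nts_replace_master hconf]) (hder.tail hG ?_ hp')
    simpa [hrule] using rstep_relabel_replace (g := untag G m B) (w := w) hcount

lemma Tagging.pair (hG : G.NoAC) {x : SForm T} {c : PairRule T} (hx : Tagging G m B x)
    (hc : TaggedPair G m B c) (hctrl : c.ctrl ∈ nts x) : Tagging G m B (c.apply x) := by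
  obtain @⟨p, U, a, b, ha, hb, hab⟩ | @⟨p, p', U, N, a, b, w, ha, hb, hab, hp', hrule, hw, hN⟩ := hc
  · obtain ⟨-, hconf, hder⟩ := hx.exists_of_master_mem hctrl
    refine .coherent (.inr ⟨U, b, hb, nts_apply_passRule ha hb hab hconf⟩) ?_
    rwa [relabel_apply_passRule hab]
  · obtain ⟨-, hconf, hder⟩ := hx.exists_of_master_mem hctrl
    have hmem : slave G b ∈ nts x := hconf ▸ mem_conf.2 (.inr ⟨b, hb, hab.symm, rfl⟩)
    have haU : a ∈ U.erase b ∪ N := Finset.mem_union_left _ (Finset.mem_erase.2 ⟨hab, ha⟩)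
    refine .coherent (.inr ⟨_, a, haU, nts_apply_applyRule ha hb hab hw hN hconf⟩) ?_
    rw [relabel_apply_applyRule hb hw hN]
    refine hder.tail hG ?_ hp'
    simpa [hrule] using rstep_relabel_replace (g := untag G m B) (w := w)
      (Multiset.count_eq_one_of_mem hx.nodup hmem)

lemma tagging_of_reachable (hG : G.NoAC) {x : SForm T}
    (hx : (toMatrixGrammar G m B).Reachable x) : Tagging G m B x := by
  induction hx with
  | refl => exact .start
  | tail _ hstep ih =>
    cases hstep with
    | single hr hmem => exact ih.single hG (mem_singles.1 hr) hmem
    | pair hc hctrl hsite => exact ih.pair hG (mem_pairs.1 hc) hctrl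

lemma separated_toMatrixGrammar (hG : G.NoAC) : (toMatrixGrammar G m B).Separated where
  nodup hx := (tagging_of_reachable hG hx).nodup
  master_unique hx ha ha' hax ha'x := by
    obtain ⟨q, rfl⟩ := mem_masters.1 ha
    obtain ⟨q', rfl⟩ := mem_masters.1 ha'
    obtain ⟨-, hconf, -⟩ := (tagging_of_reachable hG hx).exists_of_master_mem hax
    obtain h | ⟨s, -, -, h⟩ := mem_conf.1 (hconf ▸ ha'x)
    · exact h.symm
    · exact absurd h slave_ne_master
  single_notMem hr := by
    obtain @⟨p, a, ha⟩ | @⟨p, p', a, w, hp', hrule, hw, ha⟩ := mem_singles.1 hr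
    exacts [by simp, ha]
  ctrl_mem hp := by
    obtain _ | _ := mem_pairs.1 hp <;> exact mem_masters.2 ⟨_, rfl⟩
  site_notMem hp := by
    rw [mem_masters]
    obtain _ | _ := mem_pairs.1 hp <;> exact fun ⟨_, h⟩ => master_ne_slave h
  proper hp := by
    obtain ⟨_, _, hab⟩ | ⟨_, hb, _, _, _, hw, hN⟩ := mem_pairs.1 hp
    exacts [proper_passRule hab, proper_applyRule hb hw hN]
  site_mem hx hp hctrl := by
    obtain ⟨_, hb, hab⟩ | ⟨_, hb, hab, _, _, _, _⟩ := mem_pairs.1 hp <;>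
      obtain ⟨-, hconf, -⟩ := (tagging_of_reachable hG hx).exists_of_master_mem hctrl <;>
      exact hconf ▸ mem_conf.2 (.inr ⟨_, hb, hab.symm, rfl⟩)
  exists_guard hx hp hsite := by
    obtain _ | ⟨_, _, _, _, _, hw, _⟩ := mem_pairs.1 hp
    · obtain ⟨q, hne, hconf⟩ := (tagging_of_reachable hG hx).exists_of_slave_mem hsite
      refine ⟨master q, mem_masters.2 ⟨q, rfl⟩, hconf ▸ mem_conf.2 (.inl rfl), ?_⟩
      rw [passRule, nts_atom, Multiset.mem_singleton, master_inj]
      rintro rfl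
      exact hne rfl
    · obtain ⟨q, -, hconf⟩ := (tagging_of_reachable hG hx).exists_of_slave_mem hsite
      refine ⟨master q, mem_masters.2 ⟨q, rfl⟩, hconf ▸ mem_conf.2 (.inl rfl), ?_⟩
      exact fun h => master_notMem_slaves (hw ▸ h)

lemma lang_toMatrixGrammar_subset (hG : G.NoAC) : (toMatrixGrammar G m B).lang ⊆ G.lang := by
  intro w hw
  have hx := tagging_of_reachable hG hw
  generalize hx' : (w.map Sum.inr : SForm T) = x at hx
  have hnts : nts x = 0 := hx' ▸ nts_map_inr w
  cases hx with
  | start => simp at hnts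
  | @coherent p _ _ hder =>
    rw [relabel_eq_of_nts_eq_zero hnts, ← hx'] at hder
    obtain ⟨p₀, h⟩ := hder
    exact ⟨p₀, p, h⟩

lemma ntCount_eq_card_of_nts_eq_slaves {x : SForm T} {N : Finset (Slot m B)}
    (hx : nts x = G.slaves N) : ntCount x = N.card := by
  rw [ntCount_eq_card_nts, hx, slaves, Multiset.card_map, Finset.card_val]

lemma exists_fresh_tagging {z : SForm T} (hz : ∀ a ∈ nts z, a < B) {U : Finset (Slot m B)}
    (hU : U.card + ntCount z ≤ m + 1) : ∃ (w : SForm T) (N : Finset (Slot m B)),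
      nts w = G.slaves N ∧ Disjoint N U ∧ relabel (untag G m B) w = z := by
  induction z with
  | nil => exact ⟨[], ∅, rfl, Finset.disjoint_empty_left _, rfl⟩
  | cons s z ih =>
    cases s with
    | inr c =>
      obtain ⟨w, N, hw, hN, rfl⟩ := ih hz hU
      exact ⟨Sum.inr c :: w, N, hw, hN, rfl⟩
    | inl a =>
      rw [nts_inl_cons, Multiset.forall_mem_cons] at hz
      rw [ntCount_eq_card_nts, nts_inl_cons, Multiset.card_cons, ← ntCount_eq_card_nts] at hU
      obtain ⟨w, N, hw, hN, rfl⟩ := ih hz.2 (by omega)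
      rw [ntCount_relabel, ntCount_eq_card_of_nts_eq_slaves hw] at hU
      have hcard : (U ∪ N).card < (Finset.univ.image
          fun i : Fin (m + 1) => ((i, ⟨a, hz.1⟩) : Slot m B)).card := by
        rw [Finset.card_image_of_injective _ (Prod.mk_left_injective _), Finset.card_fin]
        exact (Finset.card_union_le U N).trans_lt (by omega)
      obtain ⟨s, hs, hsUN⟩ := Finset.exists_mem_notMem_of_card_lt_card hcard
      obtain ⟨i, -, rfl⟩ := Finset.mem_image.1 hs
      rw [Finset.mem_union, not_or] at hsUN
      refine ⟨Sum.inl (slave G (i, ⟨a, hz.1⟩)) :: w, insert (i, ⟨a, hz.1⟩) N, ?_, ?_, ?_⟩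
      · rw [nts_inl_cons, hw, slaves_insert hsUN.2]
      · exact Finset.disjoint_insert_left.2 ⟨hsUN.1, hN⟩
      · simp [relabel]

lemma exists_coherent_of_nts_eq_slaves (p : Fin G.nLab) {w : SForm T} {N : Finset (Slot m B)}
    (hw : nts w = G.slaves N) : ∃ w', relabel (untag G m B) w' = relabel (untag G m B) w ∧
      (nts w' = 0 ∨ ∃ c ∈ N, nts w' = conf (p, N, c)) := by
  obtain rfl | ⟨c, hc⟩ := N.eq_empty_or_nonempty
  · exact ⟨w, rfl, .inl hw⟩
  refine ⟨replace (slave G c) (atom (master (p, N, c))) w, relabel_replace_atom (by simp),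
    .inr ⟨c, hc, ?_⟩⟩
  have hcount : (nts w).count (slave G c) = 1 :=
    Multiset.count_eq_one_of_mem (hw ▸ N.nodup.map fun _ _ => slave_inj.1)
      (hw ▸ slave_mem_slaves.2 hc)
  rw [nts_replace hcount, hw, slaves_erase, nts_atom, add_comm, Multiset.singleton_add, conf]

section Steps

variable {p p' : Fin G.nLab} {U N : Finset (Slot m B)} {a b : Slot m B} {w x : SForm T}

lemma exists_step_slave (hx : nts x = conf (p, U, a)) (ha : a ∈ U) (hb : b ∈ U) (hab : a ≠ b)
    (hp' : p' ∈ G.succ p) (hrule : G.rule p = ((b.2 : ℕ), relabel (untag G m B) w))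
    (hw : nts w = G.slaves N) (hN : Disjoint N U) :
    ∃ y, (toMatrixGrammar G m B).Step x y ∧ Coherent m B p' y ∧
      relabel (untag G m B) y = relabel (untag G m B) (replace (slave G b) w x) :=
  ⟨_, .pair (mem_pairs.2 (.apply ha hb hab hp' hrule hw hN)) (hx ▸ mem_conf.2 (.inl rfl))
      (hx ▸ mem_conf.2 (.inr ⟨b, hb, hab.symm, rfl⟩)),
    .inr ⟨_, a, Finset.mem_union_left _ (Finset.mem_erase.2 ⟨hab, ha⟩),
      nts_apply_applyRule ha hb hab hw hN hx⟩,
    relabel_apply_applyRule hb hw hN⟩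

lemma exists_step_last (hx : nts x = conf (p, {a}, a)) (hp' : p' ∈ G.succ p)
    (hrule : G.rule p = ((a.2 : ℕ), relabel (untag G m B) w)) (hw : nts w = G.slaves N)
    (ha : a ∉ N) : ∃ y, (toMatrixGrammar G m B).Step x y ∧ Coherent m B p' y ∧
      relabel (untag G m B) y = relabel (untag G m B) (replace (master (p, {a}, a)) w x) := by
  obtain ⟨v, hv, hcoh⟩ := exists_coherent_of_nts_eq_slaves p' hw
  have hv' : Coherent m B p' v :=
    hcoh.imp_right fun ⟨c, hc, h⟩ => ⟨N, c, hc, h⟩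
  have hmem : master (p, {a}, a) ∉ nts v := by
    intro h
    obtain h0 | ⟨c, -, hconf⟩ := hcoh
    · simp [h0] at h
    · obtain h | ⟨s, -, -, h⟩ := mem_conf.1 (hconf ▸ h)
      · simp only [master_inj, Prod.mk.injEq] at h
        exact ha (h.2.1 ▸ Finset.mem_singleton_self a)
      · exact slave_ne_master h
  exact ⟨_, .single (mem_singles.2 (.last hp' (hv ▸ hrule) hv' hmem)) (hx ▸ mem_conf.2 (.inl rfl)),
    by rwa [Coherent, nts_replace_master hx], relabel_replace_congr hv⟩

/-- Another slot `b` first takes over the role of the master. -/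
lemma exists_step_step_master (hx : nts x = conf (p, U, a)) (ha : a ∈ U) (hb : b ∈ U) (hab : a ≠ b)
    (hp' : p' ∈ G.succ p) (hrule : G.rule p = ((a.2 : ℕ), relabel (untag G m B) w))
    (hw : nts w = G.slaves N) (hN : Disjoint N U) :
    ∃ y z, (toMatrixGrammar G m B).Step x y ∧ ntCount y = ntCount x ∧
      (toMatrixGrammar G m B).Step y z ∧ Coherent m B p' z ∧
      relabel (untag G m B) z = relabel (untag G m B) (replace (master (p, U, a)) w x) := by
  have hpass := nts_apply_passRule ha hb hab hx
  obtain ⟨z, hstep, hz, hrel⟩ := exists_step_slave hpass hb ha hab.symm hp' hrule hw hN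
  have hbw : slave G b ∉ nts w :=
    fun h => Finset.disjoint_left.1 hN (slave_mem_slaves.1 (hw ▸ h)) hb
  have hax : slave G a ∉ nts x := by simp [hx, mem_conf]
  refine ⟨(passRule p U a b).apply x, z, .pair (mem_pairs.2 (.pass ha hb hab))
    (hx ▸ mem_conf.2 (.inl rfl)) (hx ▸ mem_conf.2 (.inr ⟨b, hb, hab.symm, rfl⟩)), ?_, hstep, hz, ?_⟩
  · rw [← ntCount_relabel (untag G m B), relabel_apply_passRule hab, ntCount_relabel]
  · rw [hrel, PairRule.apply]
    simp only [passRule]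
    rw [replace_replace_comm (by simpa using hab) (by simp) hbw, replace_replace_atom hax,
      relabel_replace_atom (by simp)]

end Steps

lemma exists_derivation_of_rstep (hB : ∀ p, ∀ a ∈ nts (G.rule p).2, a < B) {p p' : Fin G.nLab}
    {x y : SForm T} (hx : Coherent m B p x) (hxm : ntCount x ≤ m)
    (hxy : RStep [G.rule p] (relabel (untag G m B) x) y) (hym : ntCount y ≤ m)
    (hp' : p' ∈ G.succ p) :
    ∃ z, Relation.ReflTransGen (fun x y => (toMatrixGrammar G m B).Step x y ∧ ntCount y ≤ m) x z ∧
      Coherent m B p' z ∧ relabel (untag G m B) z = y := by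
  obtain ⟨A, hA, hAp, hy⟩ := hxy.exists_eq_relabel_replace hx.nodup
  obtain ⟨U, a, ha, hconf, hcases⟩ := hx.exists_of_mem hA
  have hU : U.card + ntCount (G.rule p).2 ≤ m + 1 := by
    have hmem : (G.rule p).1 ∈ nts (relabel (untag G m B) x) := by
      rw [nts_relabel, ← hAp]
      exact Multiset.mem_map_of_mem _ hA
    have hcard := congrArg Multiset.card hxy.nts_eq_of_singleton
    have herase := Multiset.card_erase_add_one hmem
    rw [Multiset.card_add] at hcard
    rw [← ntCount_eq_card_nts (relabel _ x), ntCount_relabel, ntCount_eq_card_nts, hconf,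
      card_conf ha] at herase
    rw [ntCount_eq_card_nts] at hym ⊢
    omega
  obtain ⟨w, N, hw, hN, hrel⟩ := exists_fresh_tagging (hB p) hU
  have hrule {s : Slot m B} (hs : untag G m B A = s.2) :
      G.rule p = ((s.2 : ℕ), relabel (untag G m B) w) := Prod.ext (hAp ▸ hs) hrel.symm
  rw [hy w hrel] at hym ⊢
  have hbound {z} (hz : relabel (untag G m B) z = relabel (untag G m B) (replace A w x)) :
      ntCount z ≤ m := by rwa [← ntCount_relabel (untag G m B), hz]
  obtain rfl | ⟨b, hb, hba, rfl⟩ := hcases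
  · obtain rfl | hnontriv := Finset.eq_singleton_or_nontrivial ha
    · obtain ⟨z, hstep, hz, hzx⟩ := exists_step_last hconf hp' (hrule (by simp)) hw
        (Finset.disjoint_singleton_right.1 hN)
      exact ⟨z, .single ⟨hstep, hbound hzx⟩, hz, hzx⟩
    · obtain ⟨b, hb, hba⟩ := hnontriv.exists_ne a
      obtain ⟨u, z, hxu, hu, huz, hz, hzx⟩ :=
        exists_step_step_master hconf ha hb hba.symm hp' (hrule (by simp)) hw hN
      exact ⟨z, .tail (.single ⟨hxu, hu.trans_le hxm⟩) ⟨huz, hbound hzx⟩, hz, hzx⟩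
  · obtain ⟨z, hstep, hz, hzx⟩ :=
      exists_step_slave hconf ha hb hba.symm hp' (hrule (by simp)) hw hN
    exact ⟨z, .single ⟨hstep, hbound hzx⟩, hz, hzx⟩

lemma exists_initial_step (hstart : G.start < B) (p : Fin G.nLab) :
    ∃ z, (toMatrixGrammar G m B).Step [Sum.inl (initSymbol G m B)] z ∧
      Coherent m B p z ∧ relabel (untag G m B) z = [Sum.inl G.start] := by
  let a : Slot m B := (0, ⟨G.start, hstart⟩)
  have hinit : TaggedSingle G m B (initSymbol G m B, atom (master (p, {a}, a))) := .initial rfl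
  refine ⟨_, .single (mem_singles.2 hinit) (by simp), .inr ⟨{a}, a, by simp, ?_⟩, ?_⟩
  · simp [replace, conf, slaves]
  · simp [replace, relabel, atom, a]

lemma exists_derivation_of_derivation (hG : G.NoAC) (hstart : G.start < B)
    (hB : ∀ p, ∀ a ∈ nts (G.rule p).2, a < B) (hm : ntCount ([Sum.inl G.start] : SForm T) ≤ m)
    {p₀ : Fin G.nLab} {q : SForm T × Fin G.nLab}
    (hq : Relation.ReflTransGen (fun q q' => G.PStep q q' ∧ ntCount q'.1 ≤ m)
      ([Sum.inl G.start], p₀) q) :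
    ntCount q.1 ≤ m ∧ ∃ z,
      Relation.ReflTransGen (fun x y => (toMatrixGrammar G m B).Step x y ∧ ntCount y ≤ m)
        [Sum.inl (initSymbol G m B)] z ∧
      Coherent m B q.2 z ∧ relabel (untag G m B) z = q.1 := by
  induction hq with
  | refl =>
    obtain ⟨z, hstep, hz, hrel⟩ := exists_initial_step (m := m) hstart p₀
    exact ⟨hm, z, .single ⟨hstep, by rwa [← ntCount_relabel (untag G m B), hrel]⟩, hz, hrel⟩
  | tail _ hqq' ih =>
    obtain ⟨hq, x, hx, hcoh, hrel⟩ := ih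
    obtain ⟨hstep, hsucc⟩ := hG.pstep_iff.1 hqq'.1
    obtain ⟨z, hxz, hz⟩ := exists_derivation_of_rstep hB hcoh
      (by rwa [← ntCount_relabel (untag G m B), hrel]) (hrel ▸ hstep) hqq'.2 hsucc
    exact ⟨hqq'.2, z, hx.trans hxz, hz⟩

lemma langB_subset_langB_toMatrixGrammar (hG : G.NoAC) (hstart : G.start < B)
    (hB : ∀ p, ∀ a ∈ nts (G.rule p).2, a < B) : G.langB m ⊆ (toMatrixGrammar G m B).langB m := by
  rintro w ⟨p₀, p, hm, hder⟩
  obtain ⟨-, z, hz, -, hrel⟩ := exists_derivation_of_derivation hG hstart hB hm hder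
  have hnts : nts z = 0 := by
    rw [← Multiset.map_eq_zero (f := untag G m B), ← nts_relabel, hrel, nts_map_inr]
  obtain rfl : z = w.map Sum.inr := (relabel_eq_of_nts_eq_zero hnts).symm.trans hrel
  exact hz

theorem exists_separated_matrixGrammar (hG : G.NoAC) (m : ℕ) :
    ∃ H : MatrixGrammar T, H.Separated ∧ (G.LamFree → H.LamFree) ∧ H.lang ⊆ G.lang ∧
      G.langB m ⊆ H.langB m := by
  obtain ⟨B, hstart, hB⟩ := exists_symbol_bound G.start fun p => [G.rule p]
  exact ⟨toMatrixGrammar G m B, separated_toMatrixGrammar hG, lamFree_toMatrixGrammar,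
    lang_toMatrixGrammar_subset hG, langB_subset_langB_toMatrixGrammar hG hstart
      fun p => (hB p _ (List.mem_singleton_self _)).2⟩

end PG

/-! ### The families of finite index -/

section Families

variable {lf : Bool} {f : Mode} {k n : ℕ}

lemma PFamFin_subset_CDFamFinInf
    (hf : ∀ H : MatrixGrammar T, H.Separated → ∃ G : CDGS T, (H.LamFree → G.LamFree) ∧
      G.lang f ⊆ H.lang ∧ ∀ m, 1 ≤ m → H.langB m ⊆ G.langB f m) :
    PFamFin T lf false ⊆ CDFamFinInf T lf f := by
  rintro L ⟨m, hm, G, hlf, hG, hL, hind⟩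
  obtain ⟨H, hH, hHlf, hHle, hHge⟩ := PG.exists_separated_matrixGrammar (hG rfl) m
  obtain ⟨G', hGlf, hGle, hGge⟩ := hf H hH
  have hge : G.lang ⊆ G'.langB f m := hind.trans (hHge.trans (hGge m hm))
  have heq : G'.lang f = G.lang :=
    (hGle.trans hHle).antisymm (hge.trans (G'.langB_subset_lang f m))
  exact ⟨m, hm, G', fun h => hGlf (hHlf (hlf h)), heq ▸ hL, heq ▸ hge⟩

theorem CDFamFinInf_eq_PFamFin_of_counting (hk : 2 ≤ k)
    (hf : ∀ (P : List (Rule T)) n y, modeOK P f n y → k ≤ n)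
    (hfk : ∀ (P : List (Rule T)) y, modeOK P f k y) :
    CDFamFinInf T lf f = PFamFin T lf false :=
  (CDFamFinInf_subset_PFamFin lf f).antisymm <|
    PFamFin_subset_CDFamFinInf fun _ hH => MatrixGrammar.exists_cdgs_of_counting hH hk hf hfk

theorem CDFamFinInf_eq_PFamFin_of_terminating (hn : 1 ≤ n)
    (hf : ∀ (P : List (Rule T)) m y, modeOK P f m y → ∀ r ∈ P, r.1 ∉ nts y)
    (hfn : ∀ (P : List (Rule T)) y, (∀ r ∈ P, r.1 ∉ nts y) → modeOK P f n y) :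
    CDFamFinInf T lf f = PFamFin T lf false :=
  (CDFamFinInf_subset_PFamFin lf f).antisymm <|
    PFamFin_subset_CDFamFinInf fun _ hH => MatrixGrammar.exists_cdgs_of_terminating hH hn hf hfn

end Families

lemma modeOK_t_iff {P : List (Rule T)} {m : ℕ} {y : SForm T} :
    modeOK P .t m y ↔ ∀ r ∈ P, r.1 ∉ nts y := by
  simp [modeOK, exists_rstep_iff]

theorem stmt15_general (T : Type) (lf : Bool) (k : ℕ) (hk : 2 ≤ k) :
    CDFamFinInf T lf Mode.t = PFamFin T lf false ∧
    CDFamFinInf T lf (Mode.eq k) = PFamFin T lf false ∧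
    CDFamFinInf T lf (Mode.ge k) = PFamFin T lf false ∧
    (∀ k' : ℕ, 1 ≤ k' → ∀ d : ℕ → Mode,
      (d = Mode.le ∨ d = Mode.eq ∨ d = Mode.ge) →
      CDFamFinInf T lf (Mode.conj Mode.t (d k')) = PFamFin T lf false) := by
  refine ⟨?_, ?_, ?_, fun k' hk' d hd => ?_⟩
  · exact CDFamFinInf_eq_PFamFin_of_terminating le_rfl (fun _ _ _ => modeOK_t_iff.1)
      fun _ _ => modeOK_t_iff.2
  · exact CDFamFinInf_eq_PFamFin_of_counting hk (fun _ _ _ => Eq.ge) fun _ _ => rfl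
  · exact CDFamFinInf_eq_PFamFin_of_counting hk (fun _ _ _ => id) fun _ _ => le_refl k
  · have hd' (P : List (Rule T)) (y : SForm T) : modeOK P (d k') k' y := by
      obtain rfl | rfl | rfl := hd
      exacts [le_refl k', rfl, le_refl k']
    exact CDFamFinInf_eq_PFamFin_of_terminating hk' (fun _ _ _ h => modeOK_t_iff.1 h.1)
      fun P y h => ⟨modeOK_t_iff.2 h, hd' P y⟩

/-- For every k ≥ 2, the families L_fin(CD_∞, CF[−λ], t),
L_fin(CD_∞, CF[−λ], =k), L_fin(CD_∞, CF[−λ], ≥k) and, for every k' ∈ ℕ and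
Δ ∈ {≤, =, ≥}, L_fin(CD_∞, CF[−λ], (t∧Δk')) all coincide with
L_fin(P, CF[−λ]); with and without erasing rules. -/
theorem stmt15 (lf : Bool) (k : ℕ) (hk : 2 ≤ k) :
    CDFamFinInf ℕ lf Mode.t = PFamFin ℕ lf false ∧
    CDFamFinInf ℕ lf (Mode.eq k) = PFamFin ℕ lf false ∧
    CDFamFinInf ℕ lf (Mode.ge k) = PFamFin ℕ lf false ∧
    (∀ k' : ℕ, 1 ≤ k' → ∀ d : ℕ → Mode,
      (d = Mode.le ∨ d = Mode.eq ∨ d = Mode.ge) →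
      CDFamFinInf ℕ lf (Mode.conj Mode.t (d k')) = PFamFin ℕ lf false) :=
  stmt15_general ℕ lf k hk

end CDHybrid
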